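/- arXiv:2408.06692 — 3 statements merged into one kernel-verified Lean document; each statement's English description precedes it below -/
import Mathlib

section
/- Let N ≥ 5, let Z ⊂ ℝ^N be compact with 0 ∉ Z, and suppose the biharmonic capacity Cap_Δ(Z; ℝ^N) = 0. Then the Kelvin image K(Z) = { x/|x|² : x ∈ Z } also satisfies Cap_Δ(K(Z); ℝ^N) = 0. -/
open MeasureTheory Metric Set Filter

noncomputable section

abbrev E (N : ℕ) := EuclideanSpace ℝ (Fin N)

def lap {N : ℕ} (f : E N → ℝ) (x : E N) : ℝ :=
  ∑ i : Fin N, fderiv ℝ (fun y => fderiv ℝ f y (EuclideanSpace.single i 1)) x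
    (EuclideanSpace.single i 1)

def capD {N : ℕ} (U Z : Set (E N)) : ℝ :=
  sInf { c | ∃ φ : E N → ℝ, ContDiff ℝ (⊤ : ℕ∞) φ ∧ HasCompactSupport φ ∧ tsupport φ ⊆ U ∧
      (∃ V, IsOpen V ∧ Z ⊆ V ∧ ∀ x ∈ V, 1 ≤ φ x) ∧ c = ∫ x in U, (lap φ x) ^ 2 }

/-!
Let `κ` be a diffeomorphism near `Z` and `η` a cutoff equal to `1` near `κ(Z)`. If `φ` is admissible
for `Z`, then `η · (φ ∘ κ⁻¹)` is admissible for `κ(Z)`, and its Laplacian is controlled on the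
compact support of `η` by the derivatives of `φ` of order at most two. Two integrations by parts
give `‖D²φ‖₂ ≤ ‖Δφ‖₂`; since the dimension is at least five, the Gagliardo-Nirenberg-Sobolev
inequality then bounds `φ` and `Dφ` in some `L^q` with `q ≥ 2`, hence in `L²` on bounded sets, again
by `‖Δφ‖₂`. So capacities of subsets of a fixed compact set grow by at most a constant factor under
`κ`, and the Kelvin transform is such a diffeomorphism away from the origin.
-/

set_option maxSynthPendingDepth 3

open InnerProductSpace Laplacian Module
open scoped ENNReal NNReal Topology

section LpNorm

variable {α : Type*} [MeasurableSpace α] {ν : Measure α}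

theorem ofReal_integral_sq {g : α → ℝ} (hg : MemLp g 2 ν) :
    ENNReal.ofReal (∫ x, g x ^ 2 ∂ν) = eLpNorm g 2 ν ^ 2 := by
  rw [hg.eLpNorm_eq_integral_rpow_norm two_ne_zero ENNReal.ofNat_ne_top,
    ← ENNReal.ofReal_pow (by positivity)]
  simp only [ENNReal.toReal_ofNat, Real.rpow_two, Real.norm_eq_abs, sq_abs, ← one_div,
    ← Real.sqrt_eq_rpow]
  rw [Real.sq_sqrt (by positivity)]

theorem eLpNorm_restrict_le_eLpNorm_mul_rpow_measure {F : Type*} [NormedAddCommGroup F]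
    {p q : ℝ≥0∞} (hpq : p ≤ q) {u : α → F} (hu : AEStronglyMeasurable u ν) (s : Set α) :
    eLpNorm u p (ν.restrict s) ≤ eLpNorm u q ν * ν s ^ (1 / p.toReal - 1 / q.toReal) := by
  have holder := eLpNorm_le_eLpNorm_mul_rpow_measure_univ hpq (hu.restrict (s := s))
  rw [Measure.restrict_apply_univ] at holder
  exact holder.trans (mul_le_mul_left (eLpNorm_restrict_le u q ν s) _)

end LpNorm

section SecondDerivatives

theorem fderiv_fderiv_apply {𝕜 V F : Type*} [NontriviallyNormedField 𝕜] [NormedAddCommGroup V]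
    [NormedSpace 𝕜 V] [NormedAddCommGroup F] [NormedSpace 𝕜 F] {f : V → F} {x : V}
    (hf : DifferentiableAt 𝕜 (fderiv 𝕜 f) x) (v w : V) :
    fderiv 𝕜 (fun y => fderiv 𝕜 f y w) x v = fderiv 𝕜 (fderiv 𝕜 f) x v w := by
  simp [fderiv_clm_apply hf (differentiableAt_const w)]

variable {V : Type*} [NormedAddCommGroup V]

section AddHaar

variable [NormedSpace ℝ V] [FiniteDimensional ℝ V] [MeasurableSpace V] [BorelSpace V]
  {μ : Measure V} [μ.IsAddHaarMeasure] {f g : V → ℝ}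

theorem integral_mul_fderiv_of_hasCompactSupport (hf : ContDiff ℝ 1 f) (hfc : HasCompactSupport f)
    (hg : ContDiff ℝ 1 g) (v : V) :
    ∫ x, f x * fderiv ℝ g x v ∂μ = -∫ x, fderiv ℝ f x v * g x ∂μ := by
  have hf' : Continuous fun x => fderiv ℝ f x v :=
    (hf.continuous_fderiv one_ne_zero).clm_apply continuous_const
  have hg' : Continuous fun x => fderiv ℝ g x v :=
    (hg.continuous_fderiv one_ne_zero).clm_apply continuous_const
  exact integral_mul_fderiv_eq_neg_fderiv_mul_of_integrable
    ((hf'.mul hg.continuous).integrable_of_hasCompactSupport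
      (hfc.fderiv_apply ℝ v).mul_right)
    ((hf.continuous.mul hg').integrable_of_hasCompactSupport hfc.mul_right)
    ((hf.continuous.mul hg.continuous).integrable_of_hasCompactSupport hfc.mul_right)
    (fun x _ => hf.differentiable one_ne_zero x) (fun x _ => hg.differentiable one_ne_zero x)

theorem integral_fderiv_mul_fderiv_comm (hf : ContDiff ℝ 1 f) (hfc : HasCompactSupport f)
    (hg : ContDiff ℝ 2 g) (v w : V) :
    ∫ x, fderiv ℝ f x v * fderiv ℝ g x w ∂μ = ∫ x, fderiv ℝ f x w * fderiv ℝ g x v ∂μ := by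
  have hDg (u : V) : ContDiff ℝ 1 fun x => fderiv ℝ g x u :=
    (hg.fderiv_right (by norm_num)).clm_apply contDiff_const
  have hDg' : Differentiable ℝ (fderiv ℝ g) :=
    (hg.fderiv_right (m := 1) (by norm_num)).differentiable one_ne_zero
  have by_parts (u u' : V) : ∫ x, fderiv ℝ f x u * fderiv ℝ g x u' ∂μ =
      -∫ x, f x * fderiv ℝ (fderiv ℝ g) x u u' ∂μ := by
    rw [← neg_eq_iff_eq_neg, ← integral_mul_fderiv_of_hasCompactSupport hf hfc (hDg u')]
    simp only [fderiv_fderiv_apply (hDg' _)]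
  rw [by_parts, by_parts]
  congr 2 with x
  rw [(hg.contDiffAt.isSymmSndFDerivAt (by simp)).eq]

theorem integral_sq_fderiv_fderiv_apply (hf : ContDiff ℝ 3 f) (hfc : HasCompactSupport f)
    (v w : V) :
    ∫ x, fderiv ℝ (fderiv ℝ f) x v w ^ 2 ∂μ =
      ∫ x, fderiv ℝ (fderiv ℝ f) x v v * fderiv ℝ (fderiv ℝ f) x w w ∂μ := by
  have hDf (u : V) : ContDiff ℝ 2 fun x => fderiv ℝ f x u :=
    (hf.fderiv_right (by norm_num)).clm_apply contDiff_const
  have hDf' : Differentiable ℝ (fderiv ℝ f) :=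
    (hf.fderiv_right (m := 1) (by norm_num)).differentiable one_ne_zero
  have swap := integral_fderiv_mul_fderiv_comm (μ := μ) ((hDf w).of_le one_le_two)
    (hfc.fderiv_apply ℝ w) (hDf v) v w
  simp only [fderiv_fderiv_apply (hDf' _)] at swap
  have symm (x : V) : fderiv ℝ (fderiv ℝ f) x w v = fderiv ℝ (fderiv ℝ f) x v w :=
    ((hf.of_le (by norm_num)).contDiffAt.isSymmSndFDerivAt (n := 2) (by simp)).eq w v
  simpa only [symm, sq, mul_comm] using swap

end AddHaar

variable [InnerProductSpace ℝ V]

theorem sq_opNorm_le_sum_sq_norm_apply {ι F : Type*} [Fintype ι] [SeminormedAddCommGroup F]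
    [NormedSpace ℝ F] (b : OrthonormalBasis ι ℝ V) (L : V →L[ℝ] F) :
    ‖L‖ ^ 2 ≤ ∑ i, ‖L (b i)‖ ^ 2 := by
  suffices h : ‖L‖ ≤ √(∑ i, ‖L (b i)‖ ^ 2) from
    (Real.le_sqrt (norm_nonneg _) (by positivity)).1 h
  refine L.opNorm_le_bound (Real.sqrt_nonneg _) fun x => ?_
  calc ‖L x‖ = ‖∑ i, inner ℝ (b i) x • L (b i)‖ := by
        conv_lhs => rw [← b.sum_repr' x, map_sum]
        simp only [map_smul]
    _ ≤ ∑ i, ‖L (b i)‖ * ‖inner ℝ (b i) x‖ :=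
        norm_sum_le_of_le _ fun i _ => by rw [norm_smul, mul_comm]
    _ ≤ √(∑ i, ‖L (b i)‖ ^ 2) * √(∑ i, ‖inner ℝ (b i) x‖ ^ 2) :=
        Real.sum_mul_le_sqrt_mul_sqrt _ _ _
    _ = √(∑ i, ‖L (b i)‖ ^ 2) * ‖x‖ := by
        rw [b.sum_sq_norm_inner_right, Real.sqrt_sq (norm_nonneg x)]

theorem sq_opNorm_le_sum_sum_sq_apply_apply {ι : Type*} [Fintype ι] (b : OrthonormalBasis ι ℝ V)
    (B : V →L[ℝ] V →L[ℝ] ℝ) : ‖B‖ ^ 2 ≤ ∑ i, ∑ j, B (b i) (b j) ^ 2 :=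
  (sq_opNorm_le_sum_sq_norm_apply b B).trans <| Finset.sum_le_sum fun i _ => by
    simpa only [Real.norm_eq_abs, sq_abs] using sq_opNorm_le_sum_sq_norm_apply b (B (b i))

variable [FiniteDimensional ℝ V]

section Laplacian

variable {F : Type*} [NormedAddCommGroup F] [NormedSpace ℝ F]

theorem laplacian_eq_sum_fderiv_fderiv {ι : Type*} [Fintype ι] (b : OrthonormalBasis ι ℝ V)
    (f : V → F) : Δ f = fun x => ∑ i, fderiv ℝ (fderiv ℝ f) x (b i) (b i) := by
  simp [laplacian_eq_iteratedFDeriv_orthonormalBasis f b, iteratedFDeriv_two_apply]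

theorem continuous_laplacian {f : V → F} (hf : ContDiff ℝ 2 f) : Continuous (Δ f) := by
  have : Continuous (fderiv ℝ (fderiv ℝ f)) :=
    (hf.fderiv_right (m := 1) (by norm_num)).continuous_fderiv one_ne_zero
  rw [laplacian_eq_sum_fderiv_fderiv (stdOrthonormalBasis ℝ V)]
  fun_prop

theorem support_laplacian_subset (f : V → F) : Function.support (Δ f) ⊆ tsupport f := by
  refine fun x hx => tsupport_fderiv_subset ℝ (support_fderiv_subset ℝ fun h => hx ?_)
  simp [laplacian_eq_sum_fderiv_fderiv (stdOrthonormalBasis ℝ V), h]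

theorem norm_laplacian_le (f : V → F) (x : V) :
    ‖Δ f x‖ ≤ finrank ℝ V * ‖iteratedFDeriv ℝ 2 f x‖ := by
  let b := stdOrthonormalBasis ℝ V
  rw [laplacian_eq_iteratedFDeriv_orthonormalBasis f b]
  calc ‖∑ i, iteratedFDeriv ℝ 2 f x ![b i, b i]‖
      ≤ ∑ _i : Fin (finrank ℝ V), ‖iteratedFDeriv ℝ 2 f x‖ :=
        norm_sum_le_of_le _ fun i _ => by
          simpa [Fin.prod_univ_two] using
            (iteratedFDeriv ℝ 2 f x).le_opNorm ![b i, b i]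
    _ = finrank ℝ V * ‖iteratedFDeriv ℝ 2 f x‖ := by simp

theorem memLp_laplacian [MeasurableSpace V] [BorelSpace V] {μ : Measure V}
    [IsFiniteMeasureOnCompacts μ] {f : V → F} (hf : ContDiff ℝ 2 f) (hfc : HasCompactSupport f)
    (p : ℝ≥0∞) : MemLp (Δ f) p μ :=
  (continuous_laplacian hf).memLp_of_hasCompactSupport <| hfc.mono' (support_laplacian_subset f)

end Laplacian

variable [MeasurableSpace V] [BorelSpace V] {μ : Measure V} [μ.IsAddHaarMeasure] {f : V → ℝ}

theorem integral_sq_norm_fderiv_fderiv_le (hf : ContDiff ℝ 3 f) (hfc : HasCompactSupport f) :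
    ∫ x, ‖fderiv ℝ (fderiv ℝ f) x‖ ^ 2 ∂μ ≤ ∫ x, Δ f x ^ 2 ∂μ := by
  let b := stdOrthonormalBasis ℝ V
  have hD : Continuous (fderiv ℝ (fderiv ℝ f)) :=
    (hf.fderiv_right (m := 2) (by norm_num)).continuous_fderiv two_ne_zero
  have hDc : HasCompactSupport (fderiv ℝ (fderiv ℝ f)) := (hfc.fderiv ℝ).fderiv ℝ
  have integrable_mul (v w v' w' : V) : Integrable
      (fun x => fderiv ℝ (fderiv ℝ f) x v w * fderiv ℝ (fderiv ℝ f) x v' w') μ :=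
    Continuous.integrable_of_hasCompactSupport (by fun_prop) <|
      hDc.mono fun x hx h => hx (by simp [h])
  calc ∫ x, ‖fderiv ℝ (fderiv ℝ f) x‖ ^ 2 ∂μ
      ≤ ∫ x, ∑ i, ∑ j, fderiv ℝ (fderiv ℝ f) x (b i) (b j) ^ 2 ∂μ := by
        refine integral_mono_of_nonneg (.of_forall fun x => by positivity)
          (integrable_finsetSum _ fun i _ => integrable_finsetSum _ fun j _ => ?_)
          (.of_forall fun x => sq_opNorm_le_sum_sum_sq_apply_apply b _)
        simpa only [sq] using integrable_mul (b i) (b j) (b i) (b j)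
    _ = ∑ i, ∑ j, ∫ x, fderiv ℝ (fderiv ℝ f) x (b i) (b j) ^ 2 ∂μ := by
        simp only [sq]
        rw [integral_finsetSum _ fun i _ => integrable_finsetSum _ fun j _ =>
          integrable_mul _ _ _ _]
        exact Finset.sum_congr rfl fun i _ => integral_finsetSum _ fun j _ => integrable_mul _ _ _ _
    _ = ∑ i, ∑ j, ∫ x,
          fderiv ℝ (fderiv ℝ f) x (b i) (b i) * fderiv ℝ (fderiv ℝ f) x (b j) (b j) ∂μ := by
        simp only [integral_sq_fderiv_fderiv_apply hf hfc]
    _ = ∫ x, Δ f x ^ 2 ∂μ := by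
        simp only [laplacian_eq_sum_fderiv_fderiv b, sq, Finset.sum_mul_sum]
        rw [integral_finsetSum _ fun i _ => integrable_finsetSum _ fun j _ =>
          integrable_mul _ _ _ _]
        exact Finset.sum_congr rfl fun i _ =>
          (integral_finsetSum _ fun j _ => integrable_mul _ _ _ _).symm

theorem eLpNorm_iteratedFDeriv_two_le_eLpNorm_laplacian (hf : ContDiff ℝ 3 f)
    (hfc : HasCompactSupport f) :
    eLpNorm (iteratedFDeriv ℝ 2 f) 2 μ ≤ eLpNorm (Δ f) 2 μ := by
  have hD : MemLp (iteratedFDeriv ℝ 2 f) 2 μ :=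
    (hf.continuous_iteratedFDeriv (by norm_num)).memLp_of_hasCompactSupport
      (hfc.iteratedFDeriv 2)
  refine (ENNReal.pow_le_pow_left_iff two_ne_zero).1 ?_
  rw [← eLpNorm_norm, ← ofReal_integral_sq hD.norm,
    ← ofReal_integral_sq (memLp_laplacian (hf.of_le (by norm_num)) hfc 2)]
  simpa only [← norm_iteratedFDeriv_fderiv, norm_iteratedFDeriv_zero] using
    ENNReal.ofReal_le_ofReal (integral_sq_norm_fderiv_fderiv_le (μ := μ) hf hfc)

end SecondDerivatives

section Jets

variable {V W F : Type*} [NormedAddCommGroup V] [NormedSpace ℝ V] [NormedAddCommGroup W]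
  [NormedSpace ℝ W] [NormedAddCommGroup F] [NormedSpace ℝ F] {k : ℕ} {s : Set V} {x : V}

/-- The norm of the `k`-jet of `f` at `x`, encoded as the sum of the operator norms of the
derivatives of order at most `k`. -/
def jetNorm (k : ℕ) (f : V → F) (x : V) : ℝ :=
  ∑ i ∈ Finset.range (k + 1), ‖iteratedFDeriv ℝ i f x‖

theorem jetNorm_nonneg (k : ℕ) (f : V → F) (x : V) : 0 ≤ jetNorm k f x :=
  Finset.sum_nonneg fun _ _ => norm_nonneg _

theorem norm_iteratedFDeriv_le_jetNorm {i : ℕ} (hi : i ≤ k) (f : V → F) (x : V) :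
    ‖iteratedFDeriv ℝ i f x‖ ≤ jetNorm k f x :=
  Finset.single_le_sum (f := fun i => ‖iteratedFDeriv ℝ i f x‖) (fun _ _ => norm_nonneg _)
    (Finset.mem_range_succ_iff.2 hi)

theorem jetNorm_le {C : ℝ} {f : V → F} (h : ∀ i ≤ k, ‖iteratedFDeriv ℝ i f x‖ ≤ C) :
    jetNorm k f x ≤ (k + 1) * C := by
  simpa [jetNorm] using Finset.sum_le_card_nsmul (Finset.range (k + 1))
    (fun i => ‖iteratedFDeriv ℝ i f x‖) C fun i hi => h i (Finset.mem_range_succ_iff.1 hi)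

theorem continuousOn_jetNorm {f : V → F} (hs : IsOpen s) (hf : ContDiffOn ℝ k f s) :
    ContinuousOn (jetNorm k f) s :=
  continuousOn_finsetSum _ fun i hi => ContinuousOn.norm <|
    (hf.continuousOn_iteratedFDerivWithin
      (by exact_mod_cast Finset.mem_range_succ_iff.1 hi) hs.uniqueDiffOn).congr
      fun _ hy => (iteratedFDerivWithin_of_isOpen i hs hy).symm

theorem jetNorm_mul_le {A : Type*} [NormedRing A] [NormedAlgebra ℝ A] {f g : V → A}
    (hs : IsOpen s) (hf : ContDiffOn ℝ k f s) (hg : ContDiffOn ℝ k g s) (hx : x ∈ s) :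
    jetNorm k (fun y => f y * g y) x ≤ (k + 1) * (2 ^ k * (jetNorm k f x * jetNorm k g x)) := by
  refine jetNorm_le fun n hn => ?_
  have leibniz := norm_iteratedFDerivWithin_mul_le hf hg hs.uniqueDiffOn hx (n := n)
    (by exact_mod_cast hn)
  simp only [iteratedFDerivWithin_of_isOpen _ hs hx] at leibniz
  calc ‖iteratedFDeriv ℝ n (fun y => f y * g y) x‖
      ≤ ∑ i ∈ Finset.range (n + 1), n.choose i * ‖iteratedFDeriv ℝ i f x‖ *
          ‖iteratedFDeriv ℝ (n - i) g x‖ := leibniz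
    _ ≤ ∑ i ∈ Finset.range (n + 1), n.choose i * (jetNorm k f x * jetNorm k g x) :=
        Finset.sum_le_sum fun i hi => by
          have hi' : i ≤ n := Finset.mem_range_succ_iff.1 hi
          rw [mul_assoc]
          gcongr
          exacts [jetNorm_nonneg k f x, norm_iteratedFDeriv_le_jetNorm (hi'.trans hn) f x,
            norm_iteratedFDeriv_le_jetNorm ((n.sub_le i).trans hn) g x]
    _ = 2 ^ n * (jetNorm k f x * jetNorm k g x) := by
        rw [← Finset.sum_mul]
        exact_mod_cast congrArg (fun m : ℕ => (m : ℝ) * _) (Nat.sum_range_choose n)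
    _ ≤ 2 ^ k * (jetNorm k f x * jetNorm k g x) := by
        have := jetNorm_nonneg k f x
        have := jetNorm_nonneg k g x
        gcongr
        exact one_le_two

theorem jetNorm_comp_le {t : Set W} {g : W → F} {f : V → W} (ht : IsOpen t) (hs : IsOpen s)
    (hg : ContDiffOn ℝ k g t) (hf : ContDiffOn ℝ k f s) (hst : MapsTo f s t) (hx : x ∈ s) :
    jetNorm k (g ∘ f) x ≤
      (k + 1) * (k.factorial * jetNorm k g (f x) * (1 + jetNorm k f x) ^ k) := by
  refine jetNorm_le fun n hn => ?_
  have hf₀ := jetNorm_nonneg k f x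
  have hg₀ := jetNorm_nonneg k g (f x)
  have faa_di_bruno := norm_iteratedFDerivWithin_comp_le hg hf (by exact_mod_cast hn)
    ht.uniqueDiffOn hs.uniqueDiffOn hst hx (C := jetNorm k g (f x)) (D := 1 + jetNorm k f x)
    (fun i hi => by
      rw [iteratedFDerivWithin_of_isOpen i ht (hst hx)]
      exact norm_iteratedFDeriv_le_jetNorm (hi.trans hn) g (f x))
    (fun i hi₁ hi => by
      rw [iteratedFDerivWithin_of_isOpen i hs hx]
      exact (norm_iteratedFDeriv_le_jetNorm (hi.trans hn) f x).trans <|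
        (le_add_of_nonneg_left zero_le_one).trans <|
          le_self_pow₀ (le_add_of_nonneg_right hf₀) (by lia))
  rw [iteratedFDerivWithin_of_isOpen n hs hx] at faa_di_bruno
  refine faa_di_bruno.trans ?_
  gcongr
  exact le_add_of_nonneg_right hf₀

theorem exists_forall_jetNorm_mul_comp_le {A : Set V} {t : Set W} {η : V → ℝ} {κ : V → W}
    (hs : IsOpen s) (ht : IsOpen t) (hη : ContDiffOn ℝ k η s) (hκ : ContDiffOn ℝ k κ s)
    (hst : MapsTo κ s t) (hA : IsCompact A) (hAs : A ⊆ s) :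
    ∃ C : ℝ, 0 ≤ C ∧ ∀ φ : W → ℝ, ContDiffOn ℝ k φ t → ∀ x ∈ A,
      jetNorm k (fun y => η y * φ (κ y)) x ≤ C * jetNorm k φ (κ x) := by
  obtain ⟨a, ha⟩ := hA.bddAbove_image ((continuousOn_jetNorm hs hη).mono hAs)
  obtain ⟨b, hb⟩ := hA.bddAbove_image ((continuousOn_jetNorm hs hκ).mono hAs)
  rw [mem_upperBounds, forall_mem_image] at ha hb
  refine ⟨(k + 1) * (2 ^ k * (|a| * ((k + 1) * (k.factorial * (1 + |b|) ^ k)))), by positivity,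
    fun φ hφ x hx => ?_⟩
  have hφ₀ := jetNorm_nonneg k φ (κ x)
  have hκ₀ := jetNorm_nonneg k κ x
  have hcomp₀ := jetNorm_nonneg k (φ ∘ κ) x
  calc jetNorm k (fun y => η y * φ (κ y)) x
      ≤ (k + 1) * (2 ^ k * (jetNorm k η x * jetNorm k (φ ∘ κ) x)) :=
        jetNorm_mul_le hs hη (hφ.comp hκ hst) (hAs hx)
    _ ≤ (k + 1) * (2 ^ k * (|a| * ((k + 1) * (k.factorial * jetNorm k φ (κ x) *
          (1 + |b|) ^ k)))) := by
        gcongr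
        · exact (ha hx).trans (le_abs_self a)
        · refine (jetNorm_comp_le ht hs hφ hκ hst (hAs hx)).trans ?_
          gcongr
          exact (hb hx).trans (le_abs_self b)
    _ = _ := by ring

end Jets

section ChangeOfVariables

variable {V F : Type*} [NormedAddCommGroup V] [NormedSpace ℝ V] [FiniteDimensional ℝ V]
  [MeasurableSpace V] [BorelSpace V] {μ : Measure V} [μ.IsAddHaarMeasure] [NormedAddCommGroup F]

theorem exists_forall_lintegral_image_le {f : V → V} {s A : Set V} (hs : IsOpen s)
    (hf : ContDiffOn ℝ 1 f s) (hA : IsCompact A) (hAs : A ⊆ s) (hinj : InjOn f A) :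
    ∃ C ≠ ∞, ∀ h : V → ℝ≥0∞, ∫⁻ y in f '' A, h y ∂μ ≤ C * ∫⁻ x in A, h (f x) ∂μ := by
  have hdet : ContinuousOn (fun x => |(fderiv ℝ f x).det|) A :=
    (ContinuousLinearMap.continuous_det.comp_continuousOn
      ((hf.continuousOn_fderiv_of_isOpen hs le_rfl).mono hAs)).abs
  obtain ⟨c, hc⟩ := hA.bddAbove_image hdet
  rw [mem_upperBounds, forall_mem_image] at hc
  refine ⟨ENNReal.ofReal c, ENNReal.ofReal_ne_top, fun h => ?_⟩
  calc ∫⁻ y in f '' A, h y ∂μ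
      = ∫⁻ x in A, ENNReal.ofReal |(fderiv ℝ f x).det| * h (f x) ∂μ :=
        lintegral_image_eq_lintegral_abs_det_fderiv_mul μ hA.measurableSet
          (fun x hx => ((hf.contDiffAt (hs.mem_nhds (hAs hx))).differentiableAt
            one_ne_zero).hasFDerivAt.hasFDerivWithinAt) hinj h
    _ ≤ ∫⁻ x in A, ENNReal.ofReal c * h (f x) ∂μ :=
        setLIntegral_mono' hA.measurableSet fun x hx =>
          mul_le_mul_left (ENNReal.ofReal_le_ofReal (hc hx)) _
    _ = ENNReal.ofReal c * ∫⁻ x in A, h (f x) ∂μ :=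
        lintegral_const_mul' _ _ ENNReal.ofReal_ne_top

theorem exists_forall_eLpNorm_comp_le (e : OpenPartialHomeomorph V V)
    (he : ContDiffOn ℝ 1 e.symm e.target) {A : Set V} (hA : IsCompact A) (hAe : A ⊆ e.source)
    {p : ℝ≥0∞} (hp₀ : p ≠ 0) (hp : p ≠ ∞) :
    ∃ C ≠ ∞, ∀ u : V → F,
      eLpNorm (u ∘ e) p (μ.restrict A) ≤ C * eLpNorm u p (μ.restrict (e '' A)) := by
  have hB : IsCompact (e '' A) := hA.image_of_continuousOn (e.continuousOn.mono hAe)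
  have hBe : e '' A ⊆ e.target := (e.mapsTo.mono_left hAe).image_subset
  obtain ⟨C, hC, hle⟩ := exists_forall_lintegral_image_le (μ := μ) e.open_target he hB hBe
    (e.symm.injOn.mono hBe)
  rw [(e.leftInvOn.mono hAe).image_image] at hle
  have hp' : 0 ≤ 1 / p.toReal := by positivity
  refine ⟨C ^ (1 / p.toReal), ENNReal.rpow_ne_top_of_nonneg hp' hC, fun u => ?_⟩
  simp only [eLpNorm_eq_lintegral_rpow_enorm_toReal hp₀ hp]
  rw [← ENNReal.mul_rpow_of_nonneg _ _ hp']
  refine ENNReal.rpow_le_rpow ((hle _).trans_eq ?_) hp'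
  congr 1
  refine setLIntegral_congr_fun hB.measurableSet fun y hy => ?_
  simp only [Function.comp_apply, e.right_inv (hBe hy)]

end ChangeOfVariables

section Sobolev

variable {V : Type*} [NormedAddCommGroup V] [MeasurableSpace V] [BorelSpace V] {μ : Measure V}

instance finiteDimensional_continuousMultilinearMap {ι F : Type*} [Finite ι] [NormedSpace ℝ V]
    [FiniteDimensional ℝ V] [NormedAddCommGroup F] [NormedSpace ℝ F] [FiniteDimensional ℝ F] :
    FiniteDimensional ℝ (ContinuousMultilinearMap ℝ (fun _ : ι => V) F) :=
  FiniteDimensional.of_injective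
    (ContinuousMultilinearMap.toMultilinearMapLinear (R' := ℝ) (A := ℝ))
    ContinuousMultilinearMap.toMultilinearMap_injective

theorem eLpNorm_iteratedFDeriv_le_eLpNorm_iteratedFDeriv_succ [NormedSpace ℝ V]
    [FiniteDimensional ℝ V] [μ.IsAddHaarMeasure] {f : V → ℝ}
    {n : ℕ} {p p' : ℝ≥0} (hf : ContDiff ℝ (n + 1) f) (hfc : HasCompactSupport f) (hp : 1 ≤ p)
    (hV : 0 < finrank ℝ V) (hp' : (p' : ℝ)⁻¹ = (p : ℝ)⁻¹ - (finrank ℝ V : ℝ)⁻¹) :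
    eLpNorm (iteratedFDeriv ℝ n f) p' μ ≤
      SNormLESNormFDerivOfEqConst (V [×n]→L[ℝ] ℝ) μ p *
        eLpNorm (iteratedFDeriv ℝ (n + 1) f) p μ := by
  have gns := eLpNorm_le_eLpNorm_fderiv_of_eq μ
    (hf.iteratedFDeriv_right (i := n) (m := 1) (by rw [add_comm])) (hfc.iteratedFDeriv n)
    hp hV hp'
  rwa [eLpNorm_congr_norm_ae (f := fderiv ℝ _) (g := iteratedFDeriv ℝ (n + 1) f)
    (.of_forall fun _ => norm_fderiv_iteratedFDeriv)] at gns

variable [InnerProductSpace ℝ V] [FiniteDimensional ℝ V] [μ.IsAddHaarMeasure]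

/-- The exponent is given by `1 / q = 1 / 2 - (2 - n) / finrank ℝ V`; positivity for `n = 0` is what
requires dimension at least five. -/
theorem exists_forall_eLpNorm_iteratedFDeriv_le (hV : 5 ≤ finrank ℝ V) {n : ℕ} (hn : n ≤ 2) :
    ∃ q : ℝ≥0, 2 ≤ q ∧ ∃ C ≠ ∞, ∀ f : V → ℝ, ContDiff ℝ 3 f → HasCompactSupport f →
      eLpNorm (iteratedFDeriv ℝ n f) q μ ≤ C * eLpNorm (Δ f) 2 μ := by
  set d : ℝ := (finrank ℝ V : ℝ)
  have hd₀ : 0 ≤ d⁻¹ := inv_nonneg.2 (Nat.cast_nonneg _)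
  have hd : d⁻¹ ≤ 5⁻¹ := inv_anti₀ (by norm_num) (Nat.ofNat_le_cast.2 hV)
  have exponent {a : ℝ} (ha : 0 < a) (ha' : a ≤ 2⁻¹) : ∃ q : ℝ≥0, (q : ℝ)⁻¹ = a ∧ 2 ≤ q := by
    lift a to ℝ≥0 using ha.le
    exact ⟨a⁻¹, by simp, NNReal.coe_le_coe.1 (by simpa using inv_anti₀ ha ha')⟩
  obtain ⟨q₁, hq₁, hq₁'⟩ := exponent (a := 2⁻¹ - d⁻¹) (by linarith) (by linarith)
  obtain ⟨q₂, hq₂, hq₂'⟩ := exponent (a := 2⁻¹ - d⁻¹ - d⁻¹) (by linarith) (by linarith)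
  have sobolev₁ (f : V → ℝ) (hf : ContDiff ℝ 3 f) (hfc : HasCompactSupport f) :=
    (eLpNorm_iteratedFDeriv_le_eLpNorm_iteratedFDeriv_succ (μ := μ) (n := 1) (p := 2) (p' := q₁)
      (hf.of_le (by norm_num)) hfc one_le_two (by lia) (by simpa using hq₁)).trans <|
      mul_le_mul_right (eLpNorm_iteratedFDeriv_two_le_eLpNorm_laplacian hf hfc) _
  have sobolev₂ (f : V → ℝ) (hf : ContDiff ℝ 3 f) (hfc : HasCompactSupport f) :=
    (eLpNorm_iteratedFDeriv_le_eLpNorm_iteratedFDeriv_succ (μ := μ) (n := 0) (p := q₁) (p' := q₂)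
      (hf.of_le (by norm_num)) hfc (one_le_two.trans hq₁') (by lia) (by rw [hq₂, hq₁])).trans <|
      mul_le_mul_right (sobolev₁ f hf hfc) _
  interval_cases n
  · exact ⟨q₂, hq₂', _, by finiteness, fun f hf hfc =>
      (sobolev₂ f hf hfc).trans_eq (mul_assoc ..).symm⟩
  · exact ⟨q₁, hq₁', _, ENNReal.coe_ne_top, sobolev₁⟩
  · exact ⟨2, le_rfl, 1, ENNReal.one_ne_top, fun f hf hfc => by
      simpa using eLpNorm_iteratedFDeriv_two_le_eLpNorm_laplacian hf hfc⟩

theorem exists_forall_eLpNorm_iteratedFDeriv_restrict_le (hV : 5 ≤ finrank ℝ V) {s : Set V}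
    (hs : μ s ≠ ∞) {n : ℕ} (hn : n ≤ 2) : ∃ C ≠ ∞, ∀ f : V → ℝ, ContDiff ℝ 3 f →
      HasCompactSupport f →
      eLpNorm (iteratedFDeriv ℝ n f) 2 (μ.restrict s) ≤ C * eLpNorm (Δ f) 2 μ := by
  obtain ⟨q, hq, C, hC, sobolev⟩ := exists_forall_eLpNorm_iteratedFDeriv_le (μ := μ) hV hn
  have hexp : 0 ≤ 1 / (2 : ℝ≥0∞).toReal - 1 / (q : ℝ≥0∞).toReal :=
    sub_nonneg.2 (one_div_le_one_div_of_le (by simp) (by simpa using NNReal.coe_le_coe.2 hq))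
  refine ⟨_, ENNReal.mul_ne_top hC (ENNReal.rpow_ne_top_of_nonneg hexp hs), fun f hf hfc => ?_⟩
  have hDf : Continuous (iteratedFDeriv ℝ n f) :=
    hf.continuous_iteratedFDeriv (by exact_mod_cast hn.trans (by norm_num))
  rw [mul_right_comm]
  exact (eLpNorm_restrict_le_eLpNorm_mul_rpow_measure (by exact_mod_cast hq)
    hDf.aestronglyMeasurable s).trans (mul_le_mul_left (sobolev f hf hfc) _)

theorem exists_forall_eLpNorm_jetNorm_two_restrict_le (hV : 5 ≤ finrank ℝ V) {s : Set V}
    (hs : μ s ≠ ∞) : ∃ C ≠ ∞, ∀ f : V → ℝ, ContDiff ℝ 3 f → HasCompactSupport f →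
      eLpNorm (jetNorm 2 f) 2 (μ.restrict s) ≤ C * eLpNorm (Δ f) 2 μ := by
  choose! C hC sobolev using fun n (hn : n ∈ Finset.range 3) =>
    exists_forall_eLpNorm_iteratedFDeriv_restrict_le (μ := μ) hV hs (Finset.mem_range_succ_iff.1 hn)
  refine ⟨∑ n ∈ Finset.range 3, C n, ENNReal.sum_ne_top.2 hC, fun f hf hfc => ?_⟩
  have hDf (n : ℕ) (hn : n ∈ Finset.range 3) : Continuous fun x => ‖iteratedFDeriv ℝ n f x‖ :=
    (hf.continuous_iteratedFDeriv (by exact_mod_cast (Finset.mem_range.1 hn).le)).norm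
  calc eLpNorm (jetNorm 2 f) 2 (μ.restrict s)
      = eLpNorm (∑ n ∈ Finset.range 3, fun x => ‖iteratedFDeriv ℝ n f x‖) 2 (μ.restrict s) := by
        congr 1 with x
    _ ≤ ∑ n ∈ Finset.range 3, eLpNorm (fun x => ‖iteratedFDeriv ℝ n f x‖) 2 (μ.restrict s) :=
        eLpNorm_sum_le (fun n hn => (hDf n hn).aestronglyMeasurable) one_le_two
    _ ≤ ∑ n ∈ Finset.range 3, C n * eLpNorm (Δ f) 2 μ :=
        Finset.sum_le_sum fun n hn => (eLpNorm_norm _).trans_le (sobolev n hn f hf hfc)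
    _ = (∑ n ∈ Finset.range 3, C n) * eLpNorm (Δ f) 2 μ := (Finset.sum_mul ..).symm

end Sobolev

section Pullback

variable {V : Type*} [NormedAddCommGroup V]

theorem contDiff_mul_of_tsupport_subset [NormedSpace ℝ V] {n : WithTop ℕ∞} {s : Set V}
    {η g : V → ℝ} (hs : IsOpen s) (hη : ContDiff ℝ n η) (hηs : tsupport η ⊆ s)
    (hg : ContDiffOn ℝ n g s) : ContDiff ℝ n fun x => η x * g x :=
  contMDiff_iff_contDiff.1 <| contMDiff_of_tsupport fun _ hx =>
    contMDiffAt_iff_contDiffAt.2 <|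
      hη.contDiffAt.mul (hg.contDiffAt (hs.mem_nhds (hηs (tsupport_mul_subset_left hx))))

variable [InnerProductSpace ℝ V] [FiniteDimensional ℝ V] [MeasurableSpace V] [BorelSpace V]
  {μ : Measure V} [μ.IsAddHaarMeasure] {η : V → ℝ}

theorem exists_forall_eLpNorm_laplacian_mul_comp_le (hV : 5 ≤ finrank ℝ V)
    (e : OpenPartialHomeomorph V V) (he : ContDiffOn ℝ 2 e e.source)
    (he' : ContDiffOn ℝ 1 e.symm e.target) (hη : ContDiff ℝ 2 η) (hηc : HasCompactSupport η)
    (hηe : tsupport η ⊆ e.source) :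
    ∃ C ≠ ∞, ∀ φ : V → ℝ, ContDiff ℝ 3 φ → HasCompactSupport φ →
      eLpNorm (Δ fun x => η x * φ (e x)) 2 μ ≤ C * eLpNorm (Δ φ) 2 μ := by
  obtain ⟨C₁, _, jet_le⟩ := exists_forall_jetNorm_mul_comp_le (k := 2) e.open_source isOpen_univ
    hη.contDiffOn he (mapsTo_univ _ _) hηc.isCompact hηe
  obtain ⟨C₂, hC₂, comp_le⟩ := exists_forall_eLpNorm_comp_le (μ := μ) (F := ℝ) e he'
    hηc.isCompact hηe two_ne_zero ENNReal.ofNat_ne_top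
  obtain ⟨C₃, hC₃, sobolev⟩ := exists_forall_eLpNorm_jetNorm_two_restrict_le (μ := μ) hV
    (hηc.isCompact.image_of_continuousOn (e.continuousOn.mono hηe)).measure_ne_top
  refine ⟨ENNReal.ofReal (finrank ℝ V * C₁) * (C₂ * C₃), by finiteness,
    fun φ hφ hφc => ?_⟩
  have laplacian_le : ∀ᵐ x ∂μ.restrict (tsupport η),
      ‖Δ (fun y => η y * φ (e y)) x‖ ≤ finrank ℝ V * C₁ * ‖(jetNorm 2 φ ∘ e) x‖ := by
    refine ae_restrict_of_forall_mem (isClosed_tsupport η).measurableSet fun x hx => ?_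
    rw [Function.comp_apply, Real.norm_of_nonneg (jetNorm_nonneg _ _ _), mul_assoc]
    refine (norm_laplacian_le _ x).trans ?_
    gcongr
    exact (norm_iteratedFDeriv_le_jetNorm le_rfl _ x).trans
      (jet_le φ (hφ.of_le (by norm_num)).contDiffOn x hx)
  have support_le : Function.support (Δ fun x => η x * φ (e x)) ⊆ tsupport η :=
    (support_laplacian_subset _).trans (tsupport_mul_subset_left (g := fun x => φ (e x)))
  calc eLpNorm (Δ fun x => η x * φ (e x)) 2 μ
      = eLpNorm (Δ fun x => η x * φ (e x)) 2 (μ.restrict (tsupport η)) :=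
        (eLpNorm_restrict_eq_of_support_subset support_le).symm
    _ ≤ ENNReal.ofReal (finrank ℝ V * C₁) *
          eLpNorm (jetNorm 2 φ ∘ e) 2 (μ.restrict (tsupport η)) :=
        eLpNorm_le_mul_eLpNorm_of_ae_le_mul laplacian_le 2
    _ ≤ ENNReal.ofReal (finrank ℝ V * C₁) * (C₂ * (C₃ * eLpNorm (Δ φ) 2 μ)) := by
        gcongr
        refine (comp_le _).trans ?_
        gcongr
        exact sobolev φ hφ hφc
    _ = _ := by ring

theorem exists_forall_integral_sq_laplacian_mul_comp_le (hV : 5 ≤ finrank ℝ V)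
    (e : OpenPartialHomeomorph V V) (he : ContDiffOn ℝ 2 e e.source)
    (he' : ContDiffOn ℝ 1 e.symm e.target) (hη : ContDiff ℝ 2 η) (hηc : HasCompactSupport η)
    (hηe : tsupport η ⊆ e.source) :
    ∃ C : ℝ, 0 ≤ C ∧ ∀ φ : V → ℝ, ContDiff ℝ 3 φ → HasCompactSupport φ →
      ∫ x, Δ (fun y => η y * φ (e y)) x ^ 2 ∂μ ≤ C * ∫ x, Δ φ x ^ 2 ∂μ := by
  obtain ⟨C, hC, hle⟩ :=
    exists_forall_eLpNorm_laplacian_mul_comp_le (μ := μ) hV e he he' hη hηc hηe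
  refine ⟨C.toReal ^ 2, by positivity, fun φ hφ hφc => ?_⟩
  have hφ₂ : ContDiff ℝ 2 φ := hφ.of_le (by norm_num)
  have hψ : ContDiff ℝ 2 fun y => η y * φ (e y) :=
    contDiff_mul_of_tsupport_subset e.open_source hη hηe (hφ₂.comp_contDiffOn he)
  rw [← ENNReal.ofReal_le_ofReal_iff (by positivity), ENNReal.ofReal_mul (by positivity),
    ENNReal.ofReal_pow ENNReal.toReal_nonneg, ENNReal.ofReal_toReal hC,
    ofReal_integral_sq (memLp_laplacian hψ hηc.mul_right 2),
    ofReal_integral_sq (memLp_laplacian hφ₂ hφc 2), ← mul_pow]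
  gcongr
  exact hle φ hφ hφc

end Pullback

section Capacity

section IsAdmissible

variable {V : Type*} [NormedAddCommGroup V] [NormedSpace ℝ V] {Z Z' : Set V} {φ : V → ℝ}

/-- The test functions competing in the capacity of `Z`; neighborhoods of `Z` are encoded by
the filter `𝓝ˢ Z`. -/
structure IsAdmissible (Z : Set V) (φ : V → ℝ) : Prop where
  contDiff : ContDiff ℝ (⊤ : ℕ∞) φ
  hasCompactSupport : HasCompactSupport φ
  one_le : ∀ᶠ x in 𝓝ˢ Z, 1 ≤ φ x

theorem IsAdmissible.mono (hφ : IsAdmissible Z φ) (h : Z' ⊆ Z) : IsAdmissible Z' φ where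
  contDiff := hφ.contDiff
  hasCompactSupport := hφ.hasCompactSupport
  one_le := hφ.one_le.filter_mono (nhdsSet_mono h)

theorem IsAdmissible.mul_comp_symm (hφ : IsAdmissible Z φ) {e : OpenPartialHomeomorph V V}
    (he : ContDiffOn ℝ (⊤ : ℕ∞) e.symm e.target) (hZ : Z ⊆ e.source) {η : V → ℝ}
    (hη : ContDiff ℝ (⊤ : ℕ∞) η) (hηc : HasCompactSupport η) (hηe : tsupport η ⊆ e.target)
    (hη₁ : ∀ᶠ y in 𝓝ˢ (e '' Z), η y = 1) :
    IsAdmissible (e '' Z) fun y => η y * φ (e.symm y) where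
  contDiff := contDiff_mul_of_tsupport_subset e.open_target hη hηe (hφ.contDiff.comp_contDiffOn he)
  hasCompactSupport := hηc.mul_right
  one_le := by
    have hcomp : ∀ᶠ y in 𝓝ˢ (e '' Z), 1 ≤ φ (e.symm y) := by
      rw [eventually_nhdsSet_iff_forall, forall_mem_image]
      exact fun x hx => (e.tendsto_symm (hZ hx)).eventually
        (eventually_nhdsSet_iff_forall.1 hφ.one_le x hx)
    filter_upwards [hη₁, hcomp] with y hy hφy
    rwa [hy, one_mul]

theorem exists_contDiff_hasCompactSupport_eventually_eq_one [FiniteDimensional ℝ V]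
    {K U : Set V} (hK : IsCompact K) (hU : IsOpen U) (hKU : K ⊆ U) :
    ∃ η : V → ℝ, ContDiff ℝ (⊤ : ℕ∞) η ∧ HasCompactSupport η ∧ tsupport η ⊆ U ∧
      ∀ᶠ x in 𝓝ˢ K, η x = 1 := by
  obtain ⟨L, hL, hKL, hLU⟩ := exists_compact_between hK hU hKU
  obtain ⟨η, hη₁, hη₀, -⟩ := exists_contMDiffMap_one_nhds_of_subset_interior (n := (⊤ : ℕ∞))
    (modelWithCornersSelf ℝ V) hK.isClosed hKL
  have hηL : tsupport η ⊆ L :=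
    closure_minimal (fun x hx => by_contra fun h => hx (hη₀ x h)) hL.isClosed
  exact ⟨η, η.contMDiff.contDiff, hL.of_isClosed_subset (isClosed_tsupport _) hηL,
    hηL.trans hLU, hη₁⟩

theorem exists_isAdmissible [FiniteDimensional ℝ V] (hZ : IsCompact Z) :
    ∃ φ : V → ℝ, IsAdmissible Z φ := by
  obtain ⟨η, hη, hηc, -, hη₁⟩ :=
    exists_contDiff_hasCompactSupport_eventually_eq_one hZ isOpen_univ (subset_univ Z)
  exact ⟨η, hη, hηc, hη₁.mono fun x hx => hx.ge⟩

end IsAdmissible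

variable {N : ℕ} {Z : Set (E N)}

theorem lap_eq_laplacian {f : E N → ℝ} (hf : ContDiff ℝ 2 f) : lap f = Δ f := by
  have hDf : Differentiable ℝ (fderiv ℝ f) :=
    (hf.fderiv_right (m := 1) (by norm_num)).differentiable one_ne_zero
  rw [laplacian_eq_sum_fderiv_fderiv (EuclideanSpace.basisFun (Fin N) ℝ)]
  ext x
  simp only [lap, fderiv_fderiv_apply (hDf x), EuclideanSpace.basisFun_apply]

theorem capD_univ_eq_iInf (Z : Set (E N)) :
    capD univ Z = ⨅ φ : {φ : E N → ℝ // IsAdmissible Z φ}, ∫ x, Δ φ.1 x ^ 2 := by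
  refine congrArg sInf (Set.ext fun c => ?_)
  constructor
  · rintro ⟨φ, hφ, hφc, -, hφ₁, rfl⟩
    exact ⟨⟨φ, hφ, hφc, eventually_nhdsSet_iff_exists.2 hφ₁⟩, by
      rw [Measure.restrict_univ, lap_eq_laplacian (contDiff_infty.1 hφ 2)]⟩
  · rintro ⟨⟨φ, hφ⟩, rfl⟩
    exact ⟨φ, hφ.contDiff, hφ.hasCompactSupport, subset_univ _,
      eventually_nhdsSet_iff_exists.1 hφ.one_le, by
      rw [Measure.restrict_univ, lap_eq_laplacian (contDiff_infty.1 hφ.contDiff 2)]⟩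

theorem capD_univ_nonneg (Z : Set (E N)) : 0 ≤ capD univ Z := by
  rw [capD_univ_eq_iInf]
  exact Real.iInf_nonneg fun φ => integral_nonneg fun x => sq_nonneg _

theorem capD_univ_le {φ : E N → ℝ} (hφ : IsAdmissible Z φ) : capD univ Z ≤ ∫ x, Δ φ x ^ 2 := by
  rw [capD_univ_eq_iInf]
  exact ciInf_le ⟨0, forall_mem_range.2 fun φ => integral_nonneg fun x => sq_nonneg _⟩
    (⟨φ, hφ⟩ : {φ : E N → ℝ // IsAdmissible Z φ})

theorem exists_forall_capD_image_le (hN : 5 ≤ N) (e : OpenPartialHomeomorph (E N) (E N))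
    (he : ContDiffOn ℝ (⊤ : ℕ∞) e e.source) (he' : ContDiffOn ℝ (⊤ : ℕ∞) e.symm e.target)
    {K : Set (E N)} (hK : IsCompact K) (hKe : K ⊆ e.source) :
    ∃ C : ℝ, 0 ≤ C ∧ ∀ Z ⊆ K, capD univ (e '' Z) ≤ C * capD univ Z := by
  obtain ⟨η, hη, hηc, hηe, hη₁⟩ := exists_contDiff_hasCompactSupport_eventually_eq_one
    (hK.image_of_continuousOn (e.continuousOn.mono hKe)) e.open_target
    (e.mapsTo.mono_left hKe).image_subset
  obtain ⟨C, hC, hle⟩ := exists_forall_integral_sq_laplacian_mul_comp_le (μ := volume)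
    (by simpa using hN) e.symm (contDiffOn_infty.1 he' 2) (contDiffOn_infty.1 he 1)
    (contDiff_infty.1 hη 2) hηc hηe
  refine ⟨C, hC, fun Z hZK => ?_⟩
  obtain ⟨φ₀, hφ₀⟩ := exists_isAdmissible hK
  have : Nonempty {φ : E N → ℝ // IsAdmissible Z φ} :=
    ⟨⟨φ₀, hφ₀.mono hZK⟩⟩
  rw [capD_univ_eq_iInf Z, Real.mul_iInf_of_nonneg hC]
  exact le_ciInf fun ⟨φ, hφ⟩ =>
    (capD_univ_le (hφ.mul_comp_symm he' (hZK.trans hKe) hη hηc hηe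
      (hη₁.filter_mono (nhdsSet_mono (image_mono hZK))))).trans
    (hle φ (contDiff_infty.1 hφ.contDiff 3) hφ.hasCompactSupport)

theorem kelvin_capacity_zero_general (hN : 5 ≤ N) (e : OpenPartialHomeomorph (E N) (E N))
    (he : ContDiffOn ℝ (⊤ : ℕ∞) e e.source) (he' : ContDiffOn ℝ (⊤ : ℕ∞) e.symm e.target)
    (hZc : IsCompact Z) (hZe : Z ⊆ e.source) (hcap : capD univ Z = 0) :
    capD univ (e '' Z) = 0 := by
  obtain ⟨C, -, hle⟩ := exists_forall_capD_image_le hN e he he' hZc hZe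
  exact le_antisymm (by simpa [hcap] using hle Z Subset.rfl) (capD_univ_nonneg _)

end Capacity

section Inversion

variable {V : Type*} [NormedAddCommGroup V] [InnerProductSpace ℝ V]

/-- The inversion in the sphere of center `c` and radius `R ≠ 0`, as an open partial homeomorphism
of the complement of `c`. -/
def inversionOpenPartialHomeomorph (c : V) {R : ℝ} (hR : R ≠ 0) : OpenPartialHomeomorph V V where
  toFun := EuclideanGeometry.inversion c R
  invFun := EuclideanGeometry.inversion c R
  source := {c}ᶜ
  target := {c}ᶜ
  map_source' _ hx := (EuclideanGeometry.inversion_eq_center hR).not.2 hx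
  map_target' _ hx := (EuclideanGeometry.inversion_eq_center hR).not.2 hx
  left_inv' x _ := EuclideanGeometry.inversion_inversion c hR x
  right_inv' x _ := EuclideanGeometry.inversion_inversion c hR x
  open_source := isOpen_compl_singleton
  open_target := isOpen_compl_singleton
  continuousOn_toFun :=
    continuousOn_const.inversion continuousOn_const continuousOn_id fun _ hx => hx
  continuousOn_invFun :=
    continuousOn_const.inversion continuousOn_const continuousOn_id fun _ hx => hx

theorem contDiffOn_inversion (c : V) (R : ℝ) {n : ℕ∞} :
    ContDiffOn ℝ n (EuclideanGeometry.inversion c R) {c}ᶜ :=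
  contDiffOn_const.inversion contDiffOn_const contDiffOn_id fun _ hx => hx

end Inversion

theorem kelvin_capacity_zero {N : ℕ} (hN : 5 ≤ N) (Z : Set (E N))
    (hZc : IsCompact Z) (h0 : (0 : E N) ∉ Z)
    (hcap : capD (Set.univ : Set (E N)) Z = 0) :
    capD (Set.univ : Set (E N)) ((fun x : E N => (‖x‖ ^ 2)⁻¹ • x) '' Z) = 0 := by
  have kelvin_eq : (fun x : E N => (‖x‖ ^ 2)⁻¹ • x) =
      inversionOpenPartialHomeomorph 0 one_ne_zero := by
    ext1 x
    simp [inversionOpenPartialHomeomorph, EuclideanGeometry.inversion]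
  rw [kelvin_eq]
  exact kelvin_capacity_zero_general hN _ (contDiffOn_inversion 0 1) (contDiffOn_inversion 0 1) hZc
    (subset_compl_singleton_iff.2 h0) hcap
end
end

section
/- Let F : ℝ^N \ {0} → ℝ^N \ {0} be a C²-diffeomorphism and let A ⊂ ℝ^N \ {0} be a bounded open set with Lipschitz boundary. If C ⊂ A is compact with Cap_Δ(C; A) = 0, then Cap_Δ(F(C); F(A)) = 0. -/
open MeasureTheory Metric Set Filter

noncomputable section

/-!
A test function `φ` for `C` in `A` is transported to `ψ = χ · (φ ∘ F⁻¹)`, where `χ` is a fixed test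
function for `F(C)` in `F(A)`. By the Leibniz and Faà di Bruno formulas `(Δψ)²` is bounded by the
squares of the derivatives of order at most two of `φ`, composed with `F⁻¹`; the change of variables
formula on the support of `χ` bounds its integral by the squared `W^{2,2}` norm of `φ`. That norm is
controlled by `‖Δφ‖²`: integrating by parts twice gives `∫ (Δφ)² = ∑ ∫ (∂ᵢ∂ⱼφ)²`, and the Poincaré
inequality on the bounded set `A` takes care of the lower order terms. Since `F⁻¹` is only `C²`, so
is `ψ`; mollification shows that the capacity may be computed with test functions of that class.
Hence `Cap(F(C); F(A)) ≤ M · Cap(C; A)`.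
-/

open scoped ContDiff Convolution Topology

/-! ### Directional derivatives -/

section DirDeriv

variable {V W : Type*} [NormedAddCommGroup V] [NormedSpace ℝ V]
  [NormedAddCommGroup W] [NormedSpace ℝ W] {f : V → W} {m n : WithTop ℕ∞}

/-- The derivative of `f` in the direction `v`, as an operator on functions so that it can be
iterated. It is read off from `fderiv`, as in `lap`, rather than from `lineDeriv`. -/
def dirDeriv (v : V) (f : V → W) (x : V) : W := fderiv ℝ f x v

lemma contDiff_dirDeriv (v : V) (hf : ContDiff ℝ n f) (hmn : m + 1 ≤ n) :
    ContDiff ℝ m (dirDeriv v f) :=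
  (hf.fderiv_right hmn).clm_apply contDiff_const

lemma continuous_dirDeriv (v : V) (hf : ContDiff ℝ 1 f) : Continuous (dirDeriv v f) :=
  (contDiff_dirDeriv (m := 0) v hf (by norm_num)).continuous

lemma tsupport_dirDeriv_subset (v : V) (f : V → W) : tsupport (dirDeriv v f) ⊆ tsupport f :=
  tsupport_fderiv_apply_subset ℝ v

lemma hasCompactSupport_dirDeriv (v : V) (hf : HasCompactSupport f) :
    HasCompactSupport (dirDeriv v f) :=
  hf.fderiv_apply ℝ v

lemma dirDeriv_const_smul (c : ℝ) (v : V) (f : V → W) :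
    dirDeriv v (c • f) = c • dirDeriv v f := by
  ext x
  simp only [dirDeriv, fderiv_const_smul_field, Pi.smul_apply, smul_apply]

lemma dirDeriv_dirDeriv_apply (v w : V) (hf : ContDiff ℝ 2 f) (x : V) :
    dirDeriv v (dirDeriv w f) x = fderiv ℝ (fderiv ℝ f) x v w := by
  have hd : DifferentiableAt ℝ (fderiv ℝ f) x :=
    (hf.fderiv_right (m := 1) (by norm_num)).differentiable (by norm_num) x
  have h := (hd.hasFDerivAt.clm_apply (hasFDerivAt_const w x)).fderiv
  change fderiv ℝ (fun y => fderiv ℝ f y w) x v = _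
  rw [h]
  simp

lemma dirDeriv_comm (v w : V) (hf : ContDiff ℝ 2 f) :
    dirDeriv v (dirDeriv w f) = dirDeriv w (dirDeriv v f) := by
  ext x
  rw [dirDeriv_dirDeriv_apply v w hf, dirDeriv_dirDeriv_apply w v hf]
  exact hf.contDiffAt.isSymmSndFDerivAt (by simp) v w

end DirDeriv

section Integration

variable {X W : Type*} [TopologicalSpace X] [MeasurableSpace X] [OpensMeasurableSpace X]
  {μ : Measure X} [IsFiniteMeasureOnCompacts μ] [NormedAddCommGroup W]

lemma integrable_norm_sq {f : X → W} (hf : Continuous f) (hc : HasCompactSupport f) :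
    Integrable (fun x => ‖f x‖ ^ 2) μ := by
  simp only [sq]
  exact (hf.norm.mul hf.norm).integrable_of_hasCompactSupport hc.norm.mul_left

lemma integrable_sq {f : X → ℝ} (hf : Continuous f) (hc : HasCompactSupport f) :
    Integrable (fun x => f x ^ 2) μ := by
  simpa only [Real.norm_eq_abs, sq_abs] using integrable_norm_sq (μ := μ) hf hc

end Integration

section IntegrationByParts

variable {V : Type*} [NormedAddCommGroup V] [NormedSpace ℝ V] [FiniteDimensional ℝ V]
  [MeasurableSpace V] [BorelSpace V] {μ : Measure V} [μ.IsAddHaarMeasure] {u : V → ℝ}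

lemma integral_mul_dirDeriv (v : V) {f g : V → ℝ} (hf : ContDiff ℝ 1 f) (hg : ContDiff ℝ 1 g)
    (hgc : HasCompactSupport g) :
    ∫ x, f x * dirDeriv v g x ∂μ = -∫ x, dirDeriv v f x * g x ∂μ := by
  refine integral_mul_fderiv_eq_neg_fderiv_mul_of_integrable ?_ ?_ ?_
    (fun x _ => hf.differentiable one_ne_zero x) (fun x _ => hg.differentiable one_ne_zero x)
  · exact ((continuous_dirDeriv v hf).mul hg.continuous).integrable_of_hasCompactSupport
      hgc.mul_left
  · exact (hf.continuous.mul (continuous_dirDeriv v hg)).integrable_of_hasCompactSupport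
      (hasCompactSupport_dirDeriv v hgc).mul_left
  · exact (hf.continuous.mul hg.continuous).integrable_of_hasCompactSupport hgc.mul_left

lemma integral_sq_dirDeriv_dirDeriv (v w : V) (hu : ContDiff ℝ 3 u) (huc : HasCompactSupport u) :
    ∫ x, dirDeriv v (dirDeriv w u) x ^ 2 ∂μ =
      ∫ x, dirDeriv v (dirDeriv v u) x * dirDeriv w (dirDeriv w u) x ∂μ := by
  have hu₂ : ContDiff ℝ 2 u := hu.of_le (by norm_num)
  have hv : ContDiff ℝ 2 (dirDeriv v u) := contDiff_dirDeriv v hu (by norm_num)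
  have hw : ContDiff ℝ 2 (dirDeriv w u) := contDiff_dirDeriv w hu (by norm_num)
  have hwc := hasCompactSupport_dirDeriv w huc
  have third_comm : dirDeriv v (dirDeriv v (dirDeriv w u)) =
      dirDeriv w (dirDeriv v (dirDeriv v u)) := by
    rw [dirDeriv_comm v w hu₂, dirDeriv_comm v w hv]
  calc ∫ x, dirDeriv v (dirDeriv w u) x ^ 2 ∂μ
      = -∫ x, dirDeriv v (dirDeriv v (dirDeriv w u)) x * dirDeriv w u x ∂μ := by
        simp only [sq]
        exact integral_mul_dirDeriv v (contDiff_dirDeriv v hw (by norm_num))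
          (hw.of_le (by norm_num)) hwc
    _ = ∫ x, dirDeriv v (dirDeriv v u) x * dirDeriv w (dirDeriv w u) x ∂μ := by
        rw [third_comm, integral_mul_dirDeriv w (contDiff_dirDeriv v hv (by norm_num))
          (hw.of_le (by norm_num)) hwc]

lemma integral_sq_sum_dirDeriv_dirDeriv {ι : Type*} [Fintype ι] (b : ι → V)
    (hu : ContDiff ℝ 3 u) (huc : HasCompactSupport u) :
    ∫ x, (∑ i, dirDeriv (b i) (dirDeriv (b i) u) x) ^ 2 ∂μ =
      ∑ i, ∑ j, ∫ x, dirDeriv (b i) (dirDeriv (b j) u) x ^ 2 ∂μ := by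
  have hcont : ∀ i, Continuous (dirDeriv (b i) (dirDeriv (b i) u)) := fun i =>
    continuous_dirDeriv _ (contDiff_dirDeriv _ hu (by norm_num))
  have hint : ∀ i j, Integrable (fun x => dirDeriv (b i) (dirDeriv (b i) u) x *
      dirDeriv (b j) (dirDeriv (b j) u) x) μ := fun i j =>
    ((hcont i).mul (hcont j)).integrable_of_hasCompactSupport
      (hasCompactSupport_dirDeriv _ (hasCompactSupport_dirDeriv _ huc)).mul_left
  simp_rw [integral_sq_dirDeriv_dirDeriv _ _ hu huc, sq, Finset.sum_mul_sum]
  rw [integral_finsetSum _ fun i _ => integrable_finsetSum _ fun j _ => hint i j]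
  exact Finset.sum_congr rfl fun i _ => integral_finsetSum _ fun j _ => hint i j

lemma integral_sq_eq_neg_two_mul_integral {v : V} {ℓ : V →L[ℝ] ℝ} (hℓ : ℓ v = 1)
    (hu : ContDiff ℝ 1 u) (huc : HasCompactSupport u) :
    ∫ x, u x ^ 2 ∂μ = -(2 * ∫ x, ℓ x * (u x * dirDeriv v u x) ∂μ) := by
  have hℓ' : ∀ x, dirDeriv v ℓ x = 1 := fun x => by simp [dirDeriv, hℓ]
  have hsq' : ∀ x, dirDeriv v (fun x => u x * u x) x = 2 * (u x * dirDeriv v u x) := fun x => by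
    have hd := hu.differentiable one_ne_zero x
    simp only [dirDeriv, fderiv_fun_mul hd hd, add_apply, smul_apply, smul_eq_mul]
    ring
  have hparts := integral_mul_dirDeriv (μ := μ) v ℓ.contDiff (hu.mul hu) (huc.mul_left (f := u))
  simp only [hℓ', hsq', one_mul, mul_left_comm _ (2 : ℝ), integral_const_mul] at hparts
  rw [hparts, neg_neg]
  simp only [sq]

/-- Poincaré inequality: absorb the right-hand side of `integral_sq_eq_neg_two_mul_integral`. -/
lemma integral_sq_le_integral_sq_dirDeriv {v : V} {ℓ : V →L[ℝ] ℝ} (hℓ : ℓ v = 1) {R : ℝ}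
    (hu : ContDiff ℝ 1 u) (huc : HasCompactSupport u) (hR : ∀ x ∈ tsupport u, |ℓ x| ≤ R) :
    ∫ x, u x ^ 2 ∂μ ≤ 4 * R ^ 2 * ∫ x, dirDeriv v u x ^ 2 ∂μ := by
  have hcu := hu.continuous
  have hcv := continuous_dirDeriv v hu
  have hiu : Integrable (fun x => u x ^ 2) μ := integrable_sq hcu huc
  have hiv : Integrable (fun x => dirDeriv v u x ^ 2) μ :=
    integrable_sq hcv (hasCompactSupport_dirDeriv v huc)
  have hi : Integrable (fun x => ℓ x * (u x * dirDeriv v u x)) μ :=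
    (ℓ.continuous.mul (hcu.mul hcv)).integrable_of_hasCompactSupport
      (huc.mul_right (f' := dirDeriv v u)).mul_left
  have young : ∀ x, -(2 * (ℓ x * (u x * dirDeriv v u x))) ≤
      1 / 2 * u x ^ 2 + 2 * R ^ 2 * dirDeriv v u x ^ 2 := by
    intro x
    by_cases hx : x ∈ tsupport u
    · have hsq : ℓ x ^ 2 ≤ R ^ 2 := sq_le_sq' (neg_le_of_abs_le (hR x hx)) (le_of_abs_le (hR x hx))
      nlinarith [sq_nonneg (u x + 2 * (ℓ x * dirDeriv v u x)),
        mul_le_mul_of_nonneg_right hsq (sq_nonneg (dirDeriv v u x))]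
    · simp only [image_eq_zero_of_notMem_tsupport hx, zero_mul, mul_zero, neg_zero]
      positivity
  have absorb : ∫ x, u x ^ 2 ∂μ ≤
      1 / 2 * ∫ x, u x ^ 2 ∂μ + 2 * R ^ 2 * ∫ x, dirDeriv v u x ^ 2 ∂μ := by
    calc ∫ x, u x ^ 2 ∂μ = ∫ x, -(2 * (ℓ x * (u x * dirDeriv v u x))) ∂μ := by
          rw [integral_sq_eq_neg_two_mul_integral hℓ hu huc, integral_neg, integral_const_mul]
      _ ≤ ∫ x, (1 / 2 * u x ^ 2 + 2 * R ^ 2 * dirDeriv v u x ^ 2) ∂μ :=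
          integral_mono (hi.const_mul 2).neg ((hiu.const_mul _).add (hiv.const_mul _)) young
      _ = _ := by
          rw [integral_add (hiu.const_mul _) (hiv.const_mul _), integral_const_mul,
            integral_const_mul]
  linarith

lemma dirDeriv_convolution (v : V) {ρ f : V → ℝ} (hρ : LocallyIntegrable ρ μ)
    (hf : ContDiff ℝ 1 f) (hfc : HasCompactSupport f) :
    dirDeriv v (ρ ⋆[ContinuousLinearMap.lsmul ℝ ℝ, μ] f) =
      ρ ⋆[ContinuousLinearMap.lsmul ℝ ℝ, μ] dirDeriv v f := by
  ext x
  have h := hfc.hasFDerivAt_convolution_right (ContinuousLinearMap.lsmul ℝ ℝ) hρ hf x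
  simp only [dirDeriv, h.fderiv]
  exact convolution_precompR_apply _ hρ (hfc.fderiv ℝ) (hf.continuous_fderiv one_ne_zero) x v

end IntegrationByParts

/-! ### The Sobolev density -/

section SobolevDensity

variable {V W : Type*} [NormedAddCommGroup V] [NormedSpace ℝ V]
  [NormedAddCommGroup W] [NormedSpace ℝ W] {n : ℕ} {f : V → W}

/-- The integrand of the squared `W^{n,2}` norm, with operator norms on the derivatives. -/
def sobolevDensity (n : ℕ) (f : V → W) (x : V) : ℝ :=
  ∑ k ∈ Finset.range (n + 1), ‖iteratedFDeriv ℝ k f x‖ ^ 2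

lemma sobolevDensity_nonneg (n : ℕ) (f : V → W) (x : V) : 0 ≤ sobolevDensity n f x :=
  Finset.sum_nonneg fun _ _ => sq_nonneg _

lemma norm_iteratedFDeriv_le_sqrt_sobolevDensity {k : ℕ} (hk : k ≤ n) (f : V → W) (x : V) :
    ‖iteratedFDeriv ℝ k f x‖ ≤ √(sobolevDensity n f x) :=
  Real.le_sqrt_of_sq_le <| Finset.single_le_sum (f := fun k => ‖iteratedFDeriv ℝ k f x‖ ^ 2)
    (fun _ _ => sq_nonneg _) (Finset.mem_range_succ_iff.2 hk)

lemma continuous_sobolevDensity (hf : ContDiff ℝ n f) : Continuous (sobolevDensity n f) :=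
  continuous_finsetSum _ fun _ hk => (hf.continuous_iteratedFDeriv
    (by exact_mod_cast Finset.mem_range_succ_iff.1 hk)).norm.pow 2

section Integral

variable [MeasurableSpace V] [OpensMeasurableSpace V] {μ : Measure V}
  [IsFiniteMeasureOnCompacts μ]

lemma integrable_norm_sq_iteratedFDeriv {k : ℕ} (hk : k ≤ n) (hf : ContDiff ℝ n f)
    (hfc : HasCompactSupport f) : Integrable (fun x => ‖iteratedFDeriv ℝ k f x‖ ^ 2) μ :=
  integrable_norm_sq (hf.continuous_iteratedFDeriv (by exact_mod_cast hk)) (hfc.iteratedFDeriv k)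

lemma integrable_sobolevDensity (hf : ContDiff ℝ n f) (hfc : HasCompactSupport f) :
    Integrable (sobolevDensity n f) μ :=
  integrable_finsetSum _ fun _ hk =>
    integrable_norm_sq_iteratedFDeriv (Finset.mem_range_succ_iff.1 hk) hf hfc

lemma integral_sobolevDensity (hf : ContDiff ℝ n f) (hfc : HasCompactSupport f) :
    ∫ x, sobolevDensity n f x ∂μ =
      ∑ k ∈ Finset.range (n + 1), ∫ x, ‖iteratedFDeriv ℝ k f x‖ ^ 2 ∂μ :=
  integral_finsetSum _ fun _ hk =>
    integrable_norm_sq_iteratedFDeriv (Finset.mem_range_succ_iff.1 hk) hf hfc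

end Integral

lemma exists_norm_iteratedFDerivWithin_le {T K : Set V} (hT : IsOpen T) (hf : ContDiffOn ℝ n f T)
    (hK : IsCompact K) (hKT : K ⊆ T) :
    ∃ B : ℝ, 1 ≤ B ∧ ∀ k ≤ n, ∀ x ∈ K, ‖iteratedFDerivWithin ℝ k f T x‖ ≤ B := by
  have hcont : ContinuousOn
      (fun x => ∑ k ∈ Finset.range (n + 1), ‖iteratedFDerivWithin ℝ k f T x‖) K :=
    continuousOn_finsetSum _ fun k hk => ((hf.continuousOn_iteratedFDerivWithin
      (by exact_mod_cast Finset.mem_range_succ_iff.1 hk) hT.uniqueDiffOn).mono hKT).norm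
  obtain ⟨B, hB⟩ := hK.bddAbove_image hcont
  refine ⟨max 1 B, le_max_left _ _, fun k hk x hx => ?_⟩
  calc ‖iteratedFDerivWithin ℝ k f T x‖
      ≤ ∑ k ∈ Finset.range (n + 1), ‖iteratedFDerivWithin ℝ k f T x‖ :=
        Finset.single_le_sum (f := fun k => ‖iteratedFDerivWithin ℝ k f T x‖)
          (fun _ _ => norm_nonneg _) (Finset.mem_range_succ_iff.2 hk)
    _ ≤ max 1 B := (hB (mem_image_of_mem _ hx)).trans (le_max_right _ _)

/-- The Leibniz and Faà di Bruno formulas bound the `n`-th derivative of `χ · (u ∘ g)` by the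
derivatives of `u` up to order `n`; the other factors are bounded on `K`. -/
lemma exists_norm_sq_iteratedFDeriv_mul_comp_le {χ : V → ℝ} {g : V → W} {T K : Set V}
    (hT : IsOpen T) (hχ : ContDiffOn ℝ n χ T) (hg : ContDiffOn ℝ n g T) (hK : IsCompact K)
    (hKT : K ⊆ T) :
    ∃ M : ℝ, 0 ≤ M ∧ ∀ u : W → ℝ, ContDiff ℝ n u → ∀ y ∈ K,
      ‖iteratedFDeriv ℝ n (fun z => χ z * u (g z)) y‖ ^ 2 ≤ M * sobolevDensity n u (g y) := by
  obtain ⟨B, hB₁, hB⟩ := exists_norm_iteratedFDerivWithin_le hT hχ hK hKT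
  obtain ⟨D, hD₁, hD⟩ := exists_norm_iteratedFDerivWithin_le hT hg hK hKT
  let P : ℝ := ∑ i ∈ Finset.range (n + 1),
    (n.choose i : ℝ) * B * ((n - i).factorial * D ^ (n - i))
  refine ⟨P ^ 2, sq_nonneg _, fun u hu y hy => ?_⟩
  have hcomp : ∀ k ≤ n, ‖iteratedFDerivWithin ℝ k (u ∘ g) T y‖ ≤
      k.factorial * √(sobolevDensity n u (g y)) * D ^ k := fun k hk =>
    norm_iteratedFDerivWithin_comp_le hu.contDiffOn hg (by exact_mod_cast hk) uniqueDiffOn_univ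
      hT.uniqueDiffOn (mapsTo_univ _ _) (hKT hy)
      (fun i hi => by
        rw [iteratedFDerivWithin_univ]
        exact norm_iteratedFDeriv_le_sqrt_sobolevDensity (hi.trans hk) u (g y))
      (fun i hi₁ hi => (hD i (hi.trans hk) y hy).trans (le_self_pow₀ hD₁ (by lia)))
  have hprod : ‖iteratedFDeriv ℝ n (fun z => χ z * u (g z)) y‖ ≤
      P * √(sobolevDensity n u (g y)) := by
    rw [← iteratedFDerivWithin_of_isOpen n hT (hKT hy), Finset.sum_mul]
    refine (norm_iteratedFDerivWithin_mul_le hχ (hu.comp_contDiffOn hg) hT.uniqueDiffOn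
      (hKT hy) le_rfl).trans (Finset.sum_le_sum fun i hi => ?_)
    calc (n.choose i : ℝ) * ‖iteratedFDerivWithin ℝ i χ T y‖ *
          ‖iteratedFDerivWithin ℝ (n - i) (u ∘ g) T y‖
        ≤ n.choose i * B * ((n - i).factorial * √(sobolevDensity n u (g y)) * D ^ (n - i)) := by
          gcongr
          · exact hB i (Finset.mem_range_succ_iff.1 hi) y hy
          · exact hcomp (n - i) (Nat.sub_le n i)
      _ = n.choose i * B * ((n - i).factorial * D ^ (n - i)) * √(sobolevDensity n u (g y)) := by
          ring
  calc ‖iteratedFDeriv ℝ n (fun z => χ z * u (g z)) y‖ ^ 2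
      ≤ (P * √(sobolevDensity n u (g y))) ^ 2 := by gcongr
    _ = P ^ 2 * sobolevDensity n u (g y) := by
        rw [mul_pow, Real.sq_sqrt (sobolevDensity_nonneg n u _)]

end SobolevDensity

section HilbertSchmidt

variable {V W ι : Type*} [NormedAddCommGroup V] [InnerProductSpace ℝ V]
  [NormedAddCommGroup W] [NormedSpace ℝ W] [Fintype ι] (b : OrthonormalBasis ι ℝ V)

lemma norm_sq_le_sum_norm_sq_apply (T : V →L[ℝ] W) : ‖T‖ ^ 2 ≤ ∑ i, ‖T (b i)‖ ^ 2 := by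
  refine (Real.le_sqrt (norm_nonneg T) (by positivity)).1 <|
    T.opNorm_le_bound (Real.sqrt_nonneg _) fun x => ?_
  calc ‖T x‖ = ‖∑ i, inner ℝ (b i) x • T (b i)‖ := by
        conv_lhs => rw [← b.sum_repr' x]
        simp only [map_sum, map_smul]
    _ ≤ ∑ i, ‖T (b i)‖ * ‖inner ℝ (b i) x‖ :=
        (norm_sum_le _ _).trans_eq <| Finset.sum_congr rfl fun i _ => by
          rw [norm_smul, mul_comm]
    _ ≤ √(∑ i, ‖T (b i)‖ ^ 2) * √(∑ i, ‖inner ℝ (b i) x‖ ^ 2) :=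
        Real.sum_mul_le_sqrt_mul_sqrt _ _ _
    _ = √(∑ i, ‖T (b i)‖ ^ 2) * ‖x‖ := by
        rw [b.sum_sq_norm_inner_right, Real.sqrt_sq (norm_nonneg x)]

lemma norm_sq_iteratedFDeriv_one_le (f : V → W) (x : V) :
    ‖iteratedFDeriv ℝ 1 f x‖ ^ 2 ≤ ∑ i, ‖dirDeriv (b i) f x‖ ^ 2 := by
  rw [norm_iteratedFDeriv_one]
  exact norm_sq_le_sum_norm_sq_apply b _

lemma norm_iteratedFDeriv_two (f : V → W) (x : V) :
    ‖iteratedFDeriv ℝ 2 f x‖ = ‖fderiv ℝ (fderiv ℝ f) x‖ := by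
  rw [← norm_iteratedFDeriv_one (f := fderiv ℝ f), norm_iteratedFDeriv_fderiv]

lemma norm_sq_iteratedFDeriv_two_le {f : V → W} (hf : ContDiff ℝ 2 f) (x : V) :
    ‖iteratedFDeriv ℝ 2 f x‖ ^ 2 ≤ ∑ i, ∑ j, ‖dirDeriv (b i) (dirDeriv (b j) f) x‖ ^ 2 := by
  simp_rw [norm_iteratedFDeriv_two, dirDeriv_dirDeriv_apply _ _ hf]
  exact (norm_sq_le_sum_norm_sq_apply b _).trans <|
    Finset.sum_le_sum fun i _ => norm_sq_le_sum_norm_sq_apply b _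

end HilbertSchmidt

/-! ### The Laplacian and a priori estimates -/

section Laplacian

open EuclideanSpace (basisFun)

variable {N : ℕ} {f u : E N → ℝ}

lemma lap_eq_sum_dirDeriv (f : E N → ℝ) (x : E N) :
    lap f x = ∑ i, dirDeriv (basisFun (Fin N) ℝ i) (dirDeriv (basisFun (Fin N) ℝ i) f) x := by
  simp only [EuclideanSpace.basisFun_apply]
  rfl

lemma tsupport_lap_subset (f : E N → ℝ) : tsupport (lap f) ⊆ tsupport f := by
  refine closure_minimal (fun x => Function.mtr fun hx => ?_) (isClosed_tsupport f)
  refine Function.notMem_support.2 <| (lap_eq_sum_dirDeriv f x).trans <|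
    Finset.sum_eq_zero fun i _ => image_eq_zero_of_notMem_tsupport fun h => hx ?_
  exact tsupport_dirDeriv_subset _ _ (tsupport_dirDeriv_subset _ _ h)

lemma hasCompactSupport_lap (hf : HasCompactSupport f) : HasCompactSupport (lap f) :=
  hf.of_isClosed_subset (isClosed_tsupport _) (tsupport_lap_subset f)

lemma continuous_lap (hf : ContDiff ℝ 2 f) : Continuous (lap f) :=
  continuous_finsetSum _ fun _ _ =>
    continuous_dirDeriv _ (contDiff_dirDeriv _ hf (by norm_num))

lemma integrable_sq_lap (hf : ContDiff ℝ 2 f) (hfc : HasCompactSupport f) :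
    Integrable fun x => lap f x ^ 2 :=
  integrable_sq (continuous_lap hf) (hasCompactSupport_lap hfc)

lemma setIntegral_sq_lap {U : Set (E N)} (hU : tsupport f ⊆ U) :
    ∫ x in U, lap f x ^ 2 = ∫ x, lap f x ^ 2 :=
  setIntegral_eq_integral_of_forall_compl_eq_zero fun x hx => by
    rw [image_eq_zero_of_notMem_tsupport fun h => hx (hU (tsupport_lap_subset f h)),
      zero_pow two_ne_zero]

lemma lap_const_smul (c : ℝ) (f : E N → ℝ) : lap (c • f) = c • lap f := by
  ext x
  simp only [lap_eq_sum_dirDeriv, dirDeriv_const_smul, Pi.smul_apply, Finset.smul_sum]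

lemma lap_convolution {ρ : E N → ℝ} (hρ : LocallyIntegrable ρ) (hf : ContDiff ℝ 2 f)
    (hfc : HasCompactSupport f) (x : E N) :
    lap (ρ ⋆[ContinuousLinearMap.lsmul ℝ ℝ, volume] f) x =
      (ρ ⋆[ContinuousLinearMap.lsmul ℝ ℝ, volume] lap f) x := by
  have hdir : ∀ v, dirDeriv v (dirDeriv v (ρ ⋆[ContinuousLinearMap.lsmul ℝ ℝ, volume] f)) =
      ρ ⋆[ContinuousLinearMap.lsmul ℝ ℝ, volume] dirDeriv v (dirDeriv v f) := fun v => by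
    rw [dirDeriv_convolution v hρ (hf.of_le (by norm_num)) hfc, dirDeriv_convolution v hρ
      (contDiff_dirDeriv v hf (by norm_num)) (hasCompactSupport_dirDeriv v hfc)]
  have hexists : ∀ i, ConvolutionExistsAt ρ
      (dirDeriv (basisFun (Fin N) ℝ i) (dirDeriv (basisFun (Fin N) ℝ i) f)) x
      (ContinuousLinearMap.lsmul ℝ ℝ) := fun i =>
    (hasCompactSupport_dirDeriv _ (hasCompactSupport_dirDeriv _ hfc)).convolutionExists_right _ hρ
      (continuous_dirDeriv _ (contDiff_dirDeriv _ hf (by norm_num))) x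
  simp only [lap_eq_sum_dirDeriv, hdir, convolution_def, map_sum]
  exact (integral_finsetSum _ fun i _ => hexists i).symm

lemma abs_lap_le (hf : ContDiff ℝ 2 f) (x : E N) :
    |lap f x| ≤ N * ‖iteratedFDeriv ℝ 2 f x‖ := by
  calc |lap f x| ≤ ∑ i, ‖fderiv ℝ (fderiv ℝ f) x (basisFun (Fin N) ℝ i)
        (basisFun (Fin N) ℝ i)‖ := by
        simp only [lap_eq_sum_dirDeriv, dirDeriv_dirDeriv_apply _ _ hf]
        exact Finset.abs_sum_le_sum_abs _ _
    _ ≤ ∑ _i : Fin N, ‖iteratedFDeriv ℝ 2 f x‖ := Finset.sum_le_sum fun i _ => by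
        simpa only [norm_iteratedFDeriv_two, OrthonormalBasis.norm_eq_one, mul_one] using
          (fderiv ℝ (fderiv ℝ f) x).le_opNorm₂ (basisFun (Fin N) ℝ i) (basisFun (Fin N) ℝ i)
    _ = N * ‖iteratedFDeriv ℝ 2 f x‖ := by
        rw [Finset.sum_const, Finset.card_univ, Fintype.card_fin, nsmul_eq_mul]

lemma integral_sq_lap (hu : ContDiff ℝ 3 u) (huc : HasCompactSupport u) :
    ∫ x, lap u x ^ 2 = ∑ i, ∑ j,
      ∫ x, dirDeriv (basisFun (Fin N) ℝ i) (dirDeriv (basisFun (Fin N) ℝ j) u) x ^ 2 := by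
  simp only [lap_eq_sum_dirDeriv]
  exact integral_sq_sum_dirDeriv_dirDeriv _ hu huc

lemma integral_norm_sq_iteratedFDeriv_two_le (hu : ContDiff ℝ 3 u) (huc : HasCompactSupport u) :
    ∫ x, ‖iteratedFDeriv ℝ 2 u x‖ ^ 2 ≤ ∫ x, lap u x ^ 2 := by
  have hu₂ : ContDiff ℝ 2 u := hu.of_le (by norm_num)
  have hint : ∀ i j, Integrable fun x =>
      dirDeriv (basisFun (Fin N) ℝ i) (dirDeriv (basisFun (Fin N) ℝ j) u) x ^ 2 := fun i j =>
    integrable_sq (continuous_dirDeriv _ (contDiff_dirDeriv _ hu₂ (by norm_num)))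
      (hasCompactSupport_dirDeriv _ (hasCompactSupport_dirDeriv _ huc))
  rw [integral_sq_lap hu huc]
  simp only [← integral_finsetSum _ fun j _ => hint _ j]
  rw [← integral_finsetSum _ fun i _ => integrable_finsetSum _ fun j _ => hint i j]
  refine integral_mono (integrable_norm_sq_iteratedFDeriv (n := 2) le_rfl hu₂ huc)
    (integrable_finsetSum _ fun i _ => integrable_finsetSum _ fun j _ => hint i j) fun x => ?_
  simpa only [Real.norm_eq_abs, sq_abs] using
    norm_sq_iteratedFDeriv_two_le (basisFun (Fin N) ℝ) hu₂ x

variable {R : ℝ}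

lemma integral_sq_le_of_tsupport_subset_closedBall (i : Fin N) (hu : ContDiff ℝ 1 u)
    (huc : HasCompactSupport u) (hR : tsupport u ⊆ closedBall 0 R) :
    ∫ x, u x ^ 2 ≤ 4 * R ^ 2 * ∫ x, dirDeriv (basisFun (Fin N) ℝ i) u x ^ 2 :=
  integral_sq_le_integral_sq_dirDeriv (ℓ := EuclideanSpace.proj i) (by simp) hu huc fun x hx =>
    (PiLp.norm_apply_le x i).trans (mem_closedBall_zero_iff.1 (hR hx))

lemma sum_integral_sq_dirDeriv_le (hN : N ≠ 0) (hu : ContDiff ℝ 3 u) (huc : HasCompactSupport u)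
    (hR : tsupport u ⊆ closedBall 0 R) :
    ∑ j, ∫ x, dirDeriv (basisFun (Fin N) ℝ j) u x ^ 2 ≤ 4 * R ^ 2 * ∫ x, lap u x ^ 2 := by
  let i₀ : Fin N := ⟨0, Nat.pos_of_ne_zero hN⟩
  rw [integral_sq_lap hu huc]
  calc ∑ j, ∫ x, dirDeriv (basisFun (Fin N) ℝ j) u x ^ 2
      ≤ ∑ j, 4 * R ^ 2 * ∫ x, dirDeriv (basisFun (Fin N) ℝ i₀)
          (dirDeriv (basisFun (Fin N) ℝ j) u) x ^ 2 := Finset.sum_le_sum fun j _ =>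
        integral_sq_le_of_tsupport_subset_closedBall i₀ (contDiff_dirDeriv _ hu (by norm_num))
          (hasCompactSupport_dirDeriv _ huc) ((tsupport_dirDeriv_subset _ _).trans hR)
    _ ≤ 4 * R ^ 2 * ∑ i, ∑ j, ∫ x, dirDeriv (basisFun (Fin N) ℝ i)
          (dirDeriv (basisFun (Fin N) ℝ j) u) x ^ 2 := by
        rw [← Finset.mul_sum]
        refine mul_le_mul_of_nonneg_left ?_ (by positivity)
        exact Finset.single_le_sum (f := fun i => ∑ j, ∫ x, dirDeriv (basisFun (Fin N) ℝ i)
          (dirDeriv (basisFun (Fin N) ℝ j) u) x ^ 2)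
          (fun i _ => Finset.sum_nonneg fun j _ => integral_nonneg fun x => sq_nonneg _)
          (Finset.mem_univ i₀)

lemma integral_norm_sq_iteratedFDeriv_one_le (hN : N ≠ 0) (hu : ContDiff ℝ 3 u)
    (huc : HasCompactSupport u) (hR : tsupport u ⊆ closedBall 0 R) :
    ∫ x, ‖iteratedFDeriv ℝ 1 u x‖ ^ 2 ≤ 4 * R ^ 2 * ∫ x, lap u x ^ 2 := by
  have hu₁ : ContDiff ℝ 1 u := hu.of_le (by norm_num)
  have hint : ∀ j, Integrable fun x => dirDeriv (basisFun (Fin N) ℝ j) u x ^ 2 := fun j =>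
    integrable_sq (continuous_dirDeriv _ hu₁) (hasCompactSupport_dirDeriv _ huc)
  refine le_trans ?_ (sum_integral_sq_dirDeriv_le hN hu huc hR)
  rw [← integral_finsetSum _ fun j _ => hint j]
  refine integral_mono (integrable_norm_sq_iteratedFDeriv (n := 1) le_rfl hu₁ huc)
    (integrable_finsetSum _ fun j _ => hint j) fun x => ?_
  simpa only [Real.norm_eq_abs, sq_abs] using
    norm_sq_iteratedFDeriv_one_le (basisFun (Fin N) ℝ) u x

lemma integral_sq_le_integral_sq_lap (hN : N ≠ 0) (hu : ContDiff ℝ 3 u)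
    (huc : HasCompactSupport u) (hR : tsupport u ⊆ closedBall 0 R) :
    ∫ x, u x ^ 2 ≤ (4 * R ^ 2) ^ 2 * ∫ x, lap u x ^ 2 := by
  let i₀ : Fin N := ⟨0, Nat.pos_of_ne_zero hN⟩
  calc ∫ x, u x ^ 2
      ≤ 4 * R ^ 2 * ∫ x, dirDeriv (basisFun (Fin N) ℝ i₀) u x ^ 2 :=
        integral_sq_le_of_tsupport_subset_closedBall i₀ (hu.of_le (by norm_num)) huc hR
    _ ≤ 4 * R ^ 2 * ∑ j, ∫ x, dirDeriv (basisFun (Fin N) ℝ j) u x ^ 2 := by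
        gcongr
        exact Finset.single_le_sum
          (f := fun j => ∫ x, dirDeriv (basisFun (Fin N) ℝ j) u x ^ 2)
          (fun j _ => integral_nonneg fun x => sq_nonneg _) (Finset.mem_univ i₀)
    _ ≤ 4 * R ^ 2 * (4 * R ^ 2 * ∫ x, lap u x ^ 2) := by
        gcongr
        exact sum_integral_sq_dirDeriv_le hN hu huc hR
    _ = (4 * R ^ 2) ^ 2 * ∫ x, lap u x ^ 2 := by ring

lemma integral_sobolevDensity_two_le (hN : N ≠ 0) (hu : ContDiff ℝ 3 u)
    (huc : HasCompactSupport u) (hR : tsupport u ⊆ closedBall 0 R) :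
    ∫ x, sobolevDensity 2 u x ≤ ((4 * R ^ 2) ^ 2 + 4 * R ^ 2 + 1) * ∫ x, lap u x ^ 2 := by
  have h₀ : ∫ x, ‖iteratedFDeriv ℝ 0 u x‖ ^ 2 ≤ (4 * R ^ 2) ^ 2 * ∫ x, lap u x ^ 2 := by
    simpa only [norm_iteratedFDeriv_zero, Real.norm_eq_abs, sq_abs] using
      integral_sq_le_integral_sq_lap hN hu huc hR
  have h₁ := integral_norm_sq_iteratedFDeriv_one_le hN hu huc hR
  have h₂ := integral_norm_sq_iteratedFDeriv_two_le hu huc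
  rw [integral_sobolevDensity (hu.of_le (by norm_num)) huc, Finset.sum_range_succ,
    Finset.sum_range_succ, Finset.sum_range_one]
  linarith

end Laplacian

/-! ### Capacity test functions -/

/-- The test functions of class `C^n` for the capacity of `Z` in `U`. The capacity `capD U Z` is
defined by those of class `C^∞`, but a `C^n` diffeomorphism only transports those of class `C^n`. -/
structure IsCapacityTest {N : ℕ} (n : WithTop ℕ∞) (U Z : Set (E N)) (φ : E N → ℝ) : Prop where
  contDiff : ContDiff ℝ n φ
  hasCompactSupport : HasCompactSupport φ
  tsupport_subset : tsupport φ ⊆ U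
  eventually_one_le : ∀ᶠ x in 𝓝ˢ Z, 1 ≤ φ x

section Capacity

variable {N : ℕ} {U Z : Set (E N)} {φ : E N → ℝ} {a c : ℝ}

lemma capD_eq_sInf (U Z : Set (E N)) :
    capD U Z = sInf ((fun φ => ∫ x, lap φ x ^ 2) '' {φ | IsCapacityTest ∞ U Z φ}) := by
  unfold capD
  congr 1 with c
  constructor
  · rintro ⟨φ, hφ, hφc, hφU, hφ₁, rfl⟩
    exact ⟨φ, ⟨hφ, hφc, hφU, eventually_nhdsSet_iff_exists.2 hφ₁⟩, (setIntegral_sq_lap hφU).symm⟩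
  · rintro ⟨φ, hφ, rfl⟩
    exact ⟨φ, hφ.contDiff, hφ.hasCompactSupport, hφ.tsupport_subset,
      eventually_nhdsSet_iff_exists.1 hφ.eventually_one_le,
      (setIntegral_sq_lap hφ.tsupport_subset).symm⟩

lemma zero_mem_lowerBounds_integral_sq_lap (S : Set (E N → ℝ)) :
    0 ∈ lowerBounds ((fun φ => ∫ x, lap φ x ^ 2) '' S) :=
  forall_mem_image.2 fun _ _ => integral_nonneg fun _ => sq_nonneg _

lemma capD_nonneg (U Z : Set (E N)) : 0 ≤ capD U Z := by
  rw [capD_eq_sInf]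
  exact Real.sInf_nonneg (zero_mem_lowerBounds_integral_sq_lap _)

lemma le_mul_capD (hc : 0 ≤ c) (hne : ∃ φ, IsCapacityTest ∞ U Z φ)
    (h : ∀ φ, IsCapacityTest ∞ U Z φ → a ≤ c * ∫ x, lap φ x ^ 2) : a ≤ c * capD U Z := by
  obtain ⟨φ₀, hφ₀⟩ := hne
  have hglb := isGLB_csInf
    (s := (fun φ => ∫ x, lap φ x ^ 2) '' {φ | IsCapacityTest ∞ U Z φ}) ⟨_, φ₀, hφ₀, rfl⟩
    ⟨0, zero_mem_lowerBounds_integral_sq_lap _⟩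
  rw [capD_eq_sInf]
  refine (hglb.mul_left hc).2 ?_
  rw [image_image]
  exact forall_mem_image.2 h

lemma sq_mul_capD_le (hφ : ContDiff ℝ ∞ φ) (hφc : HasCompactSupport φ) (hφU : tsupport φ ⊆ U)
    (hc : 0 < c) (hφZ : ∀ᶠ x in 𝓝ˢ Z, c ≤ φ x) : c ^ 2 * capD U Z ≤ ∫ x, lap φ x ^ 2 := by
  have hsupp : tsupport (c⁻¹ • φ) ⊆ tsupport φ := tsupport_smul_subset_right (fun _ => c⁻¹) φ
  have htest : IsCapacityTest ∞ U Z (c⁻¹ • φ) :=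
    { contDiff := hφ.const_smul c⁻¹
      hasCompactSupport := hφc.of_isClosed_subset (isClosed_tsupport _) hsupp
      tsupport_subset := hsupp.trans hφU
      eventually_one_le := hφZ.mono fun x hx => by
        simpa only [Pi.smul_apply, smul_eq_mul, inv_mul_cancel₀ hc.ne'] using
          mul_le_mul_of_nonneg_left hx (inv_nonneg.2 hc.le) }
  calc c ^ 2 * capD U Z ≤ c ^ 2 * ∫ x, lap (c⁻¹ • φ) x ^ 2 := by
        rw [capD_eq_sInf]
        gcongr
        exact csInf_le ⟨0, zero_mem_lowerBounds_integral_sq_lap _⟩ (mem_image_of_mem _ htest)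
    _ = ∫ x, lap φ x ^ 2 := by
        simp only [lap_const_smul, Pi.smul_apply, smul_eq_mul, mul_pow, integral_const_mul,
          inv_pow]
        exact mul_inv_cancel_left₀ (pow_ne_zero 2 hc.ne') _

lemma exists_isCapacityTest (hZ : IsCompact Z) (hU : IsOpen U) (hZU : Z ⊆ U) :
    ∃ φ, IsCapacityTest ∞ U Z φ := by
  obtain ⟨L, hL, hZL, hLU⟩ := exists_compact_between hZ hU hZU
  obtain ⟨φ, hφ₁, hφ₀, -⟩ := exists_contMDiffMap_one_nhds_of_subset_interior
    (n := ⊤) (modelWithCornersSelf ℝ (E N)) hZ.isClosed hZL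
  have hsupp : tsupport φ ⊆ L :=
    closure_minimal (fun x => Function.mtr fun hx => Function.notMem_support.2 (hφ₀ x hx))
      hL.isClosed
  exact ⟨φ, φ.contMDiff.contDiff, hL.of_isClosed_subset (isClosed_tsupport _) hsupp,
    hsupp.trans hLU, hφ₁.mono fun x hx => hx.ge⟩

end Capacity

/-! ### Mollification of test functions -/

section Mollification

section NormedSpace

variable {V W : Type*} [NormedAddCommGroup V] [NormedSpace ℝ V] [FiniteDimensional ℝ V]
  [MeasurableSpace V] [BorelSpace V] {μ : Measure V} [μ.IsAddHaarMeasure]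
  [NormedAddCommGroup W] [NormedSpace ℝ W]

lemma tsupport_normed_convolution_subset (ρ : ContDiffBump (0 : V)) (f : V → W) :
    tsupport (ρ.normed μ ⋆[ContinuousLinearMap.lsmul ℝ ℝ, μ] f) ⊆
      cthickening ρ.rOut (tsupport f) := by
  refine closure_minimal (((support_convolution_subset _).trans ?_).trans
    (thickening_subset_cthickening _ _)) isClosed_cthickening
  rw [ρ.support_normed_eq, ball_add_zero]
  exact thickening_subset_of_subset _ (subset_tsupport f)

lemma exists_forall_dist_normed_convolution_le [CompleteSpace W] {f : V → W}
    (hf : UniformContinuous f) {η : ℝ} (hη : 0 < η) :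
    ∃ δ > 0, ∀ ρ : ContDiffBump (0 : V), ρ.rOut ≤ δ → ∀ x,
      dist ((ρ.normed μ ⋆[ContinuousLinearMap.lsmul ℝ ℝ, μ] f) x) (f x) ≤ η := by
  obtain ⟨δ, hδ, hfδ⟩ := Metric.uniformContinuous_iff.1 hf η hη
  exact ⟨δ, hδ, fun ρ hρ x => ρ.dist_normed_convolution_le hf.continuous.aestronglyMeasurable
    fun y hy => (hfδ ((mem_ball.1 hy).trans_le hρ)).le⟩

end NormedSpace

variable {N : ℕ} {ψ : E N → ℝ} {η : ℝ}

lemma exists_contDiff_abs_sub_le_abs_lap_sub_le (hψ : ContDiff ℝ 2 ψ) (hψc : HasCompactSupport ψ)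
    {r : ℝ} (hr : 0 < r) (hη : 0 < η) :
    ∃ φ : E N → ℝ, ContDiff ℝ ∞ φ ∧ tsupport φ ⊆ cthickening r (tsupport ψ) ∧
      (∀ x, |φ x - ψ x| ≤ η) ∧ ∀ x, |lap φ x - lap ψ x| ≤ η := by
  obtain ⟨δ, hδ, hδψ⟩ := exists_forall_dist_normed_convolution_le (μ := volume)
    (hψc.uniformContinuous_of_continuous hψ.continuous) hη
  obtain ⟨δ', hδ', hδψ'⟩ := exists_forall_dist_normed_convolution_le (μ := volume)
    ((hasCompactSupport_lap hψc).uniformContinuous_of_continuous (continuous_lap hψ)) hη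
  have hpos : 0 < min r (min δ δ') := lt_min hr (lt_min hδ hδ')
  let ρ : ContDiffBump (0 : E N) := ⟨_, _, half_pos hpos, half_lt_self hpos⟩
  refine ⟨ρ.normed volume ⋆[ContinuousLinearMap.lsmul ℝ ℝ, volume] ψ, ?_, ?_, ?_, fun x => ?_⟩
  · exact ρ.hasCompactSupport_normed.contDiff_convolution_left _ ρ.contDiff_normed
      hψ.continuous.locallyIntegrable
  · exact (tsupport_normed_convolution_subset ρ ψ).trans
      (cthickening_mono (min_le_left _ _) _)
  · exact hδψ ρ ((min_le_right _ _).trans (min_le_left _ _))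
  · rw [lap_convolution ρ.continuous_normed.locallyIntegrable hψ hψc]
    exact hδψ' ρ ((min_le_right _ _).trans (min_le_right _ _)) x

lemma integral_sq_le_of_abs_sub_le {X : Type*} [MeasurableSpace X] {μ : Measure X} {f g : X → ℝ}
    {K : Set X} (hK : μ K ≠ ⊤) (hfK : ∀ x ∉ K, f x = 0) (hfg : ∀ x, |f x - g x| ≤ η)
    (hg : Integrable g μ) (hg₂ : Integrable (fun x => g x ^ 2) μ) (hη : 0 ≤ η) :
    ∫ x, f x ^ 2 ∂μ ≤ ∫ x, g x ^ 2 ∂μ + 2 * η * ∫ x, |g x| ∂μ + η ^ 2 * μ.real K := by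
  have hpt : ∀ x, f x ^ 2 ≤ g x ^ 2 + 2 * η * |g x| + η ^ 2 := fun x => by
    have habs : |f x| ≤ |g x| + η := by linarith [abs_sub_abs_le_abs_sub (f x) (g x), hfg x]
    calc f x ^ 2 = |f x| ^ 2 := (sq_abs _).symm
      _ ≤ (|g x| + η) ^ 2 := by gcongr
      _ = g x ^ 2 + 2 * η * |g x| + η ^ 2 := by rw [add_sq, sq_abs]; ring
  have hsum : Integrable (fun x => g x ^ 2 + 2 * η * |g x|) μ := hg₂.add (hg.abs.const_mul _)
  have hconst : IntegrableOn (fun _ => η ^ 2) K μ := integrableOn_const hK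
  have hbound : IntegrableOn (fun x => g x ^ 2 + 2 * η * |g x| + η ^ 2) K μ :=
    hsum.integrableOn.add hconst
  calc ∫ x, f x ^ 2 ∂μ = ∫ x in K, f x ^ 2 ∂μ :=
        (setIntegral_eq_integral_of_forall_compl_eq_zero fun x hx => by simp [hfK x hx]).symm
    _ ≤ ∫ x in K, (g x ^ 2 + 2 * η * |g x| + η ^ 2) ∂μ :=
        integral_mono_of_nonneg (.of_forall fun _ => sq_nonneg _) hbound (.of_forall hpt)
    _ = ∫ x in K, (g x ^ 2 + 2 * η * |g x|) ∂μ + η ^ 2 * μ.real K := by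
        rw [integral_add hsum.integrableOn hconst, setIntegral_const, smul_eq_mul,
          mul_comm (μ.real K)]
    _ ≤ ∫ x, (g x ^ 2 + 2 * η * |g x|) ∂μ + η ^ 2 * μ.real K := by
        gcongr ?_ + _
        exact setIntegral_le_integral hsum (.of_forall fun x => by positivity)
    _ = _ := by rw [integral_add hg₂ (hg.abs.const_mul _), integral_const_mul]

variable {U Z : Set (E N)}

lemma IsCapacityTest.capD_le (hψ : IsCapacityTest 2 U Z ψ) (hU : IsOpen U) :
    capD U Z ≤ ∫ x, lap ψ x ^ 2 := by
  have hψc := hψ.hasCompactSupport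
  obtain ⟨r, hr, hrU⟩ := hψc.isCompact.exists_cthickening_subset_open hU hψ.tsupport_subset
  set K : Set (E N) := cthickening r (tsupport ψ)
  have hK : IsCompact K := hψc.isCompact.cthickening
  let bound : ℝ → ℝ := fun η =>
    (∫ x, lap ψ x ^ 2) + 2 * η * (∫ x, |lap ψ x|) + η ^ 2 * volume.real K
  have hbound : ∀ η, 0 < η → η < 1 → (1 - η) ^ 2 * capD U Z ≤ bound η := by
    intro η hη hη₁
    obtain ⟨φ, hφ, hφK, hφψ, hlap⟩ :=
      exists_contDiff_abs_sub_le_abs_lap_sub_le hψ.contDiff hψc hr hη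
    refine (sq_mul_capD_le hφ (hK.of_isClosed_subset (isClosed_tsupport _) hφK) (hφK.trans hrU)
      (sub_pos.2 hη₁) (hψ.eventually_one_le.mono fun x hx => ?_)).trans ?_
    · linarith [(abs_le.1 (hφψ x)).1]
    · exact integral_sq_le_of_abs_sub_le hK.measure_lt_top.ne
        (fun x hx => image_eq_zero_of_notMem_tsupport
          fun h => hx (hφK (tsupport_lap_subset φ h))) hlap
        ((continuous_lap hψ.contDiff).integrable_of_hasCompactSupport (hasCompactSupport_lap hψc))
        (integrable_sq_lap hψ.contDiff hψc) hη.le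
  have hleft : Tendsto (fun η : ℝ => (1 - η) ^ 2 * capD U Z) (𝓝[>] 0) (𝓝 (capD U Z)) :=
    (Continuous.tendsto' (by fun_prop) 0 _ (by ring)).mono_left nhdsWithin_le_nhds
  have hright : Tendsto bound (𝓝[>] 0) (𝓝 (∫ x, lap ψ x ^ 2)) :=
    (Continuous.tendsto' (by fun_prop) 0 _ (by simp [bound])).mono_left nhdsWithin_le_nhds
  refine le_of_tendsto_of_tendsto hleft hright ?_
  filter_upwards [Ioo_mem_nhdsGT zero_lt_one] with η hη using hbound η hη.1 hη.2

end Mollification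

/-! ### Transport by a diffeomorphism -/

section Transport

section NormedSpace

variable {V W : Type*} [NormedAddCommGroup V] [NormedSpace ℝ V]
  [NormedAddCommGroup W] [NormedSpace ℝ W] {n : WithTop ℕ∞}

lemma contDiff_mul_comp {χ : V → ℝ} {g : V → W} {u : W → ℝ} {T : Set V} (hT : IsOpen T)
    (hχ : ContDiff ℝ n χ) (hχT : tsupport χ ⊆ T) (hg : ContDiffOn ℝ n g T)
    (hu : ContDiff ℝ n u) : ContDiff ℝ n fun y => χ y * u (g y) := by
  refine contMDiff_iff_contDiff.1 <| contMDiff_of_tsupport fun y hy => ?_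
  have hyT : T ∈ 𝓝 y := hT.mem_nhds (hχT (tsupport_mul_subset_left hy))
  exact (hχ.contDiffAt.mul (hu.contDiffAt.comp y (hg.contDiffAt hyT))).contMDiffAt

variable [FiniteDimensional ℝ V] [MeasurableSpace V] [BorelSpace V] {μ : Measure V}
  [μ.IsAddHaarMeasure]

lemma exists_setIntegral_comp_symm_le {e : OpenPartialHomeomorph V V}
    (he : ContDiffOn ℝ 1 e e.source) {K : Set V} (hK : IsCompact K) (hKt : K ⊆ e.target) :
    ∃ L : ℝ, 0 ≤ L ∧ ∀ h : V → ℝ, Integrable h μ → (∀ x, 0 ≤ h x) →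
      ∫ y in K, h (e.symm y) ∂μ ≤ L * ∫ x, h x ∂μ := by
  set S : Set V := e.symm '' K
  have hS : IsCompact S := hK.image_of_continuousOn (e.continuousOn_symm.mono hKt)
  have hSs : S ⊆ e.source := (image_mono hKt).trans e.symm_image_target_eq_source.subset
  have hderiv : ∀ x ∈ S, HasFDerivWithinAt e (fderiv ℝ e x) S x := fun x hx =>
    ((he.contDiffAt (e.open_source.mem_nhds (hSs hx))).differentiableAt
      one_ne_zero).hasFDerivAt.hasFDerivWithinAt
  have hjac : ContinuousOn (fun x => |(fderiv ℝ e x).det|) S :=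
    (ContinuousLinearMap.continuous_det.comp_continuousOn
      ((he.continuousOn_fderiv_of_isOpen e.open_source le_rfl).mono hSs)).abs
  have hSK : e '' S = K := e.toPartialEquiv.image_symm_image_of_subset_target hKt
  obtain ⟨L, hL⟩ := hS.bddAbove_image hjac
  refine ⟨max L 0, le_max_right _ _, fun h hint hnonneg => ?_⟩
  calc ∫ y in K, h (e.symm y) ∂μ
      = ∫ x in S, |(fderiv ℝ e x).det| • h (e.symm (e x)) ∂μ := by
        rw [← integral_image_eq_integral_abs_det_fderiv_smul μ hS.measurableSet hderiv
          (e.injOn.mono hSs) fun y => h (e.symm y), hSK]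
    _ = ∫ x in S, |(fderiv ℝ e x).det| * h x ∂μ :=
        setIntegral_congr_fun hS.measurableSet fun x hx => by
          simp only [e.left_inv (hSs hx), smul_eq_mul]
    _ ≤ ∫ x in S, max L 0 * h x ∂μ := by
        refine integral_mono_of_nonneg
          (.of_forall fun x => mul_nonneg (abs_nonneg _) (hnonneg x))
          (hint.integrableOn.const_mul _) ((ae_restrict_iff' hS.measurableSet).2 (.of_forall ?_))
        exact fun x hx => mul_le_mul_of_nonneg_right
          ((hL (mem_image_of_mem _ hx)).trans (le_max_left _ _)) (hnonneg x)
    _ = max L 0 * ∫ x in S, h x ∂μ := integral_const_mul _ _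
    _ ≤ max L 0 * ∫ x, h x ∂μ := mul_le_mul_of_nonneg_left
        (setIntegral_le_integral hint (.of_forall hnonneg)) (le_max_right _ _)

end NormedSpace

variable {N : ℕ} {e : OpenPartialHomeomorph (E N) (E N)}

lemma exists_integral_sq_lap_mul_comp_symm_le (he : ContDiffOn ℝ 1 e e.source)
    (he' : ContDiffOn ℝ 2 e.symm e.target) {χ : E N → ℝ} (hχ : ContDiff ℝ 2 χ)
    (hχc : HasCompactSupport χ) (hχt : tsupport χ ⊆ e.target) :
    ∃ M : ℝ, 0 ≤ M ∧ ∀ u : E N → ℝ, ContDiff ℝ 2 u → HasCompactSupport u →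
      ∫ y, lap (fun z => χ z * u (e.symm z)) y ^ 2 ≤ M * ∫ x, sobolevDensity 2 u x := by
  obtain ⟨M, hM, hMbound⟩ := exists_norm_sq_iteratedFDeriv_mul_comp_le (n := 2) e.open_target
    hχ.contDiffOn he' hχc.isCompact hχt
  obtain ⟨L, hL, hLbound⟩ := exists_setIntegral_comp_symm_le (μ := volume) he hχc.isCompact hχt
  refine ⟨N ^ 2 * M * L, by positivity, fun u hu huc => ?_⟩
  have hψ : ContDiff ℝ 2 fun z => χ z * u (e.symm z) :=
    contDiff_mul_comp e.open_target hχ hχt he' hu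
  have hdensity : IntegrableOn (fun y => N ^ 2 * M * sobolevDensity 2 u (e.symm y))
      (tsupport χ) :=
    (((continuous_sobolevDensity hu).comp_continuousOn
      (e.continuousOn_symm.mono hχt)).const_mul _).integrableOn_compact hχc.isCompact
  have hpt : ∀ y ∈ tsupport χ, lap (fun z => χ z * u (e.symm z)) y ^ 2 ≤
      N ^ 2 * M * sobolevDensity 2 u (e.symm y) := fun y hy =>
    calc lap (fun z => χ z * u (e.symm z)) y ^ 2
        ≤ (N * ‖iteratedFDeriv ℝ 2 (fun z => χ z * u (e.symm z)) y‖) ^ 2 :=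
          sq_le_sq.2 ((abs_lap_le hψ y).trans (le_abs_self _))
      _ ≤ N ^ 2 * M * sobolevDensity 2 u (e.symm y) := by
          rw [mul_pow, mul_assoc]
          gcongr
          exact hMbound u hu y hy
  calc ∫ y, lap (fun z => χ z * u (e.symm z)) y ^ 2
      = ∫ y in tsupport χ, lap (fun z => χ z * u (e.symm z)) y ^ 2 :=
        (setIntegral_sq_lap tsupport_mul_subset_left).symm
    _ ≤ ∫ y in tsupport χ, N ^ 2 * M * sobolevDensity 2 u (e.symm y) :=
        integral_mono_of_nonneg (.of_forall fun _ => sq_nonneg _) hdensity <|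
          (ae_restrict_iff' (isClosed_tsupport χ).measurableSet).2 (.of_forall hpt)
    _ ≤ N ^ 2 * M * (L * ∫ x, sobolevDensity 2 u x) := by
        rw [integral_const_mul]
        gcongr
        exact hLbound _ (integrable_sobolevDensity hu huc) (sobolevDensity_nonneg 2 u)
    _ = N ^ 2 * M * L * ∫ x, sobolevDensity 2 u x := (mul_assoc _ _ _).symm

lemma IsCapacityTest.mul_comp_symm {n : WithTop ℕ∞} {U Z : Set (E N)} {χ φ : E N → ℝ}
    (he' : ContDiffOn ℝ n e.symm e.target) (hZ : Z ⊆ e.source)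
    (hχ : IsCapacityTest n e.target (e '' Z) χ) (hφ : IsCapacityTest n U Z φ) :
    IsCapacityTest n e.target (e '' Z) fun y => χ y * φ (e.symm y) where
  contDiff := contDiff_mul_comp e.open_target hχ.contDiff hχ.tsupport_subset he' hφ.contDiff
  hasCompactSupport := hχ.hasCompactSupport.mul_right
  tsupport_subset := tsupport_mul_subset_left.trans hχ.tsupport_subset
  eventually_one_le := by
    have hcomp : ∀ᶠ y in 𝓝ˢ (e '' Z), 1 ≤ φ (e.symm y) := by
      refine eventually_nhdsSet_iff_forall.2 (forall_mem_image.2 fun x hx => ?_)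
      have hlim : Tendsto e.symm (𝓝 (e x)) (𝓝 x) := e.tendsto_symm (hZ hx)
      exact hlim.eventually (eventually_nhdsSet_iff_forall.1 hφ.eventually_one_le x hx)
    filter_upwards [hχ.eventually_one_le, hcomp] with y hχy hφy
    exact one_le_mul_of_one_le_of_one_le hχy hφy

lemma exists_capD_target_le_mul_capD_source (hN : N ≠ 0) (he : ContDiffOn ℝ 1 e e.source)
    (he' : ContDiffOn ℝ 2 e.symm e.target) (hbdd : Bornology.IsBounded e.source)
    {C : Set (E N)} (hC : IsCompact C) (hCs : C ⊆ e.source) :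
    ∃ M : ℝ, capD e.target (e '' C) ≤ M * capD e.source C := by
  have hCt : e '' C ⊆ e.target := (image_mono hCs).trans e.image_source_eq_target.subset
  obtain ⟨χ, hχ⟩ := exists_isCapacityTest (hC.image_of_continuousOn (e.continuousOn.mono hCs))
    e.open_target hCt
  have hχ₂ : IsCapacityTest 2 e.target (e '' C) χ :=
    { hχ with contDiff := contDiff_infty.1 hχ.contDiff 2 }
  obtain ⟨M, hM, hMbound⟩ := exists_integral_sq_lap_mul_comp_symm_le he he' hχ₂.contDiff
    hχ.hasCompactSupport hχ.tsupport_subset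
  obtain ⟨R, hR⟩ := hbdd.subset_closedBall 0
  refine ⟨M * ((4 * R ^ 2) ^ 2 + 4 * R ^ 2 + 1), le_mul_capD (by positivity)
    (exists_isCapacityTest hC e.open_source hCs) fun φ hφ => ?_⟩
  have hφ₂ : IsCapacityTest 2 e.source C φ :=
    { hφ with contDiff := contDiff_infty.1 hφ.contDiff 2 }
  calc capD e.target (e '' C)
      ≤ ∫ y, lap (fun z => χ z * φ (e.symm z)) y ^ 2 :=
        (hχ₂.mul_comp_symm he' hCs hφ₂).capD_le e.open_target
    _ ≤ M * ∫ x, sobolevDensity 2 φ x := hMbound φ hφ₂.contDiff hφ.hasCompactSupport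
    _ ≤ M * (((4 * R ^ 2) ^ 2 + 4 * R ^ 2 + 1) * ∫ x, lap φ x ^ 2) := by
        gcongr
        exact integral_sobolevDensity_two_le hN (contDiff_infty.1 hφ.contDiff 3)
          hφ.hasCompactSupport (hφ.tsupport_subset.trans hR)
    _ = M * ((4 * R ^ 2) ^ 2 + 4 * R ^ 2 + 1) * ∫ x, lap φ x ^ 2 := (mul_assoc _ _ _).symm

end Transport

theorem diffeo_capacity_zero_general {N : ℕ} (hN : N ≠ 0) {A T : Set (E N)} {F G : E N → E N}
    (hA : IsOpen A) (hT : IsOpen T) (hF : ContDiffOn ℝ 1 F A) (hG : ContDiffOn ℝ 2 G T)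
    (hmaps : MapsTo F A T) (hinv : InvOn G F A T) (hAbdd : Bornology.IsBounded A)
    {C : Set (E N)} (hC : IsCompact C) (hCA : C ⊆ A) (hcap : capD A C = 0) :
    capD (F '' A) (F '' C) = 0 := by
  let e : OpenPartialHomeomorph (E N) (E N) :=
    { toFun := F
      invFun := G
      source := A
      target := T ∩ G ⁻¹' A
      map_source' := fun x hx => ⟨hmaps hx, mem_preimage.2 ((hinv.1 hx).symm ▸ hx)⟩
      map_target' := fun y hy => hy.2
      left_inv' := fun x hx => hinv.1 hx
      right_inv' := fun y hy => hinv.2 hy.1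
      open_source := hA
      open_target := hG.continuousOn.isOpen_inter_preimage hT hA
      continuousOn_toFun := hF.continuousOn
      continuousOn_invFun := hG.continuousOn.mono inter_subset_left }
  obtain ⟨M, hM⟩ := exists_capD_target_le_mul_capD_source (e := e) hN hF
    (hG.mono inter_subset_left) hAbdd hC hCA
  have hle : capD (F '' A) (F '' C) ≤ 0 := by
    calc capD (F '' A) (F '' C) = capD e.target (e '' C) := by
          rw [← e.image_source_eq_target]
          rfl
      _ ≤ M * capD A C := hM
      _ = 0 := by rw [hcap, mul_zero]
  exact hle.antisymm (capD_nonneg _ _)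

theorem diffeo_capacity_zero {N : ℕ} (hN : 5 ≤ N)
    (F G : E N → E N)
    (hFdiff : ContDiffOn ℝ 2 F ({0}ᶜ : Set (E N)))
    (hGdiff : ContDiffOn ℝ 2 G ({0}ᶜ : Set (E N)))
    (hFbij : Set.BijOn F ({0}ᶜ : Set (E N)) ({0}ᶜ : Set (E N)))
    (hInv : Set.InvOn G F ({0}ᶜ : Set (E N)) ({0}ᶜ : Set (E N)))
    (A : Set (E N)) (hAopen : IsOpen A) (hAbdd : Bornology.IsBounded A)
    (hA0 : A ⊆ ({0}ᶜ : Set (E N)))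
    (C : Set (E N)) (hCc : IsCompact C) (hCA : C ⊆ A)
    (hcap : capD A C = 0) :
    capD (F '' A) (F '' C) = 0 :=
  diffeo_capacity_zero_general (by lia) hAopen isOpen_compl_singleton
    ((hFdiff.mono hA0).of_le one_le_two) hGdiff (hFbij.mapsTo.mono_left hA0)
    (hInv.mono hA0 Subset.rfl) hAbdd hCc hCA hcap
end
end

section
/- Let N ≥ 5, p > N/(N-4), and let u ≥ 0 be a distributional solution of Δ²u = u^p on ℝ^N with u ∈ L^p_loc(ℝ^N). Then for every R > 0, ∫_{B_R} u^p dx ≤ C R^{N - 4p/(p-1)} with C independent of R, and consequently ∫_{B_R} u dx ≤ C R^{N - 4/(p-1)}. -/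
open MeasureTheory Metric Set Filter

noncomputable section

/-!
For a solution `u`, test the equation with a cutoff `φ` of the ball `B_R` that is a high power of a
bump function, so that `|Δ²φ| ≤ A R⁻⁴ φ^{1/p}`. With `X = ∫ u^p φ`, Hölder's inequality on `B_{2R}`
gives `X ≤ A R⁻⁴ X^{1/p} |B_{2R}|^{1/q}`, where `1/p + 1/q = 1`. Since `p > 1`, the factor `X^{1/p}`
can be absorbed, which leaves `X ≤ (A R⁻⁴)^q |B_{2R}|`, a multiple of `R^{N - 4q}`. Hölder's
inequality on `B_R` then bounds `∫_{B_R} u`.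
-/

section RealPowers

theorem le_rpow_of_le_mul_rpow_inv {p q a x : ℝ} (hpq : p.HolderConjugate q) (ha : 0 ≤ a)
    (hx : 0 ≤ x) (h : x ≤ a * x ^ p⁻¹) : x ≤ a ^ q := by
  rcases hx.eq_or_lt with rfl | hx
  · exact Real.rpow_nonneg ha q
  · have hsplit : x ^ q⁻¹ * x ^ p⁻¹ = x := by
      rw [← Real.rpow_add hx, add_comm, hpq.inv_add_inv_eq_one, Real.rpow_one]
    have hroot : x ^ q⁻¹ ≤ a :=
      le_of_mul_le_mul_right (hsplit.trans_le h) (Real.rpow_pos_of_pos hx _)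
    exact (Real.rpow_inv_le_iff_of_pos hx.le ha hpq.symm.pos).1 hroot

theorem pow_le_rpow_pow {t r : ℝ} {m n : ℕ} (ht₀ : 0 ≤ t) (ht₁ : t ≤ 1) (hm : m ≠ 0)
    (hr : n * r ≤ m) : t ^ m ≤ (t ^ n) ^ r := by
  rcases ht₀.eq_or_lt with rfl | ht
  · rw [zero_pow hm]
    positivity
  · rw [← Real.rpow_natCast t n, ← Real.rpow_mul ht.le, ← Real.rpow_natCast t m]
    exact Real.rpow_le_rpow_of_exponent_ge ht ht₁ hr

end RealPowers

section Holder

variable {α : Type*} [MeasurableSpace α] {μ : Measure α} {f : α → ℝ} {p : ℝ}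

theorem memLp_ofReal_of_integrable_rpow (hp : 0 < p) (hf : 0 ≤ᵐ[μ] f)
    (hfp : Integrable (fun x => f x ^ p) μ) : MemLp f (ENNReal.ofReal p) μ := by
  have hroot : (fun x => (f x ^ p) ^ p⁻¹) =ᵐ[μ] f := by
    filter_upwards [hf] with x hx using Real.rpow_rpow_inv hx hp.ne'
  have hmeas : AEStronglyMeasurable f μ :=
    (hfp.aemeasurable.pow_const p⁻¹).aestronglyMeasurable.congr hroot
  rw [← integrable_norm_rpow_iff hmeas (by simpa using hp) ENNReal.ofReal_ne_top,
    ENNReal.toReal_ofReal hp.le]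
  refine hfp.congr ?_
  filter_upwards [hf] with x hx
  rw [Real.norm_of_nonneg hx]

variable [IsFiniteMeasure μ]

theorem integral_le_rpow_mul_measureReal_rpow {q : ℝ} (hpq : p.HolderConjugate q)
    (hf : 0 ≤ᵐ[μ] f) (hfp : Integrable (fun x => f x ^ p) μ) :
    ∫ x, f x ∂μ ≤ (∫ x, f x ^ p ∂μ) ^ p⁻¹ * μ.real univ ^ q⁻¹ := by
  simpa using integral_mul_le_Lp_mul_Lq_of_nonneg hpq hf
    (Eventually.of_forall fun _ => zero_le_one)
    (memLp_ofReal_of_integrable_rpow hpq.pos hf hfp) (memLp_const 1)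

theorem integrable_of_integrable_rpow (hp : 1 ≤ p) (hf : 0 ≤ᵐ[μ] f)
    (hfp : Integrable (fun x => f x ^ p) μ) : Integrable f μ :=
  (memLp_ofReal_of_integrable_rpow (one_pos.trans_le hp) hf hfp).integrable
    (by simpa using ENNReal.ofReal_le_ofReal hp)

end Holder

section PowMultiple

variable {F : Type*} [NormedAddCommGroup F] [NormedSpace ℝ F] {η f : F → ℝ} {k : ℕ}

/-- `f` lies in the ideal generated by `η ^ k` in the ring of smooth functions. Each derivative
lowers the power by at most one, which bounds the derivatives of a power by a lower power. -/
def IsPowMultiple (η : F → ℝ) (k : ℕ) (f : F → ℝ) : Prop :=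
  ∃ g : F → ℝ, ContDiff ℝ (⊤ : ℕ∞) g ∧ f = fun x => η x ^ k * g x

theorem isPowMultiple_pow (η : F → ℝ) (k : ℕ) : IsPowMultiple η k fun x => η x ^ k :=
  ⟨fun _ => 1, contDiff_const, by simp⟩

theorem IsPowMultiple.sum {ι : Type*} {s : Finset ι} {f : ι → F → ℝ}
    (hf : ∀ i ∈ s, IsPowMultiple η k (f i)) : IsPowMultiple η k fun x => ∑ i ∈ s, f i x := by
  choose! g hg hfg using hf
  refine ⟨fun x => ∑ i ∈ s, g i x, ContDiff.sum hg, ?_⟩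
  funext x
  rw [Finset.mul_sum]
  exact Finset.sum_congr rfl fun i hi => congrFun (hfg i hi) x

theorem IsPowMultiple.fderiv_apply (hη : ContDiff ℝ (⊤ : ℕ∞) η)
    (hf : IsPowMultiple η (k + 1) f) (v : F) :
    IsPowMultiple η k fun x => fderiv ℝ f x v := by
  obtain ⟨g, hg, rfl⟩ := hf
  have smooth_fderiv {h : F → ℝ} (hh : ContDiff ℝ (⊤ : ℕ∞) h) :
      ContDiff ℝ (⊤ : ℕ∞) fun x => fderiv ℝ h x v :=
    (hh.fderiv_right (m := (⊤ : ℕ∞)) (by simp)).clm_apply contDiff_const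
  refine ⟨fun x => (k + 1) * fderiv ℝ η x v * g x + η x * fderiv ℝ g x v, ?_, ?_⟩
  · have := smooth_fderiv hη
    have := smooth_fderiv hg
    fun_prop
  · funext x
    have hηx : DifferentiableAt ℝ η x := hη.differentiable (by simp) x
    have hgx : DifferentiableAt ℝ g x := hg.differentiable (by simp) x
    rw [fderiv_fun_mul (hηx.fun_pow _) hgx, fderiv_fun_pow _ hηx]
    simp
    ring

theorem IsPowMultiple.exists_abs_le (hη : HasCompactSupport η) (hk : k ≠ 0)
    (hf : IsPowMultiple η k f) : ∃ C > 0, ∀ x, |f x| ≤ C * |η x| ^ k := by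
  obtain ⟨g, hg, rfl⟩ := hf
  obtain ⟨C, hC⟩ := hη.exists_bound_of_continuousOn hg.continuous.continuousOn
  refine ⟨max C 1, by positivity, fun x => ?_⟩
  by_cases hx : x ∈ tsupport η
  · rw [abs_mul, abs_pow, mul_comm]
    gcongr
    exact (hC x hx).trans (le_max_left _ _)
  · simp [image_eq_zero_of_notMem_tsupport hx, hk]

theorem IsPowMultiple.lap_of_add_two {N : ℕ} {η f : E N → ℝ} (hη : ContDiff ℝ (⊤ : ℕ∞) η)
    (hf : IsPowMultiple η (k + 2) f) : IsPowMultiple η k (lap f) :=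
  .sum fun i _ => (hf.fderiv_apply hη (EuclideanSpace.single i 1)).fderiv_apply hη _

end PowMultiple

section Scaling

theorem fderiv_const_mul_apply {F : Type*} [NormedAddCommGroup F] [NormedSpace ℝ F] (f : F → ℝ)
    (c : ℝ) (x v : F) : fderiv ℝ (fun y => c * f y) x v = c * fderiv ℝ f x v :=
  congrArg (fun L : F →L[ℝ] ℝ => L v) (congrFun (fderiv_const_smul_field c (f := f)) x)

theorem fderiv_comp_smul_sub {F G : Type*} [NormedAddCommGroup F] [NormedSpace ℝ F]
    [NormedAddCommGroup G] [NormedSpace ℝ G] (f : F → G) (c : ℝ) (a x : F) :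
    fderiv ℝ (fun y => f (c • (y - a))) x = c • fderiv ℝ f (c • (x - a)) := by
  rw [fderiv_comp_sub (f := fun y => f (c • y)), fderiv_comp_smul]

variable {N : ℕ} (f : E N → ℝ) (c : ℝ)

theorem lap_const_mul : (lap fun y => c * f y) = fun x => c * lap f x := by
  funext x
  simp only [lap, fderiv_const_mul_apply, Finset.mul_sum]

theorem lap_comp_smul_sub (a : E N) :
    (lap fun y => f (c • (y - a))) = fun x => c ^ 2 * lap f (c • (x - a)) := by
  funext x
  simp only [lap, fderiv_comp_smul_sub, smul_apply, smul_eq_mul, fderiv_const_mul_apply,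
    Finset.mul_sum]
  refine Finset.sum_congr rfl fun i _ => ?_
  rw [fderiv_comp_smul_sub (fun y => fderiv ℝ f y (EuclideanSpace.single i 1)),
    smul_apply, smul_eq_mul, ← mul_assoc, sq]

theorem lap_lap_comp_smul_sub (a x : E N) :
    lap (lap fun y => f (c • (y - a))) x = c ^ 4 * lap (lap f) (c • (x - a)) := by
  rw [lap_comp_smul_sub, lap_const_mul, lap_comp_smul_sub]
  ring

end Scaling

/-- A smooth cutoff of `ball x₀ R` inside `closedBall x₀ (2 * R)` whose bilaplacian is controlled by
its `p`-th root; the factor `R⁻¹ ^ 4` makes the constant `A` invariant under rescaling. -/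
structure IsBilaplacianCutoff {N : ℕ} (p A : ℝ) (x₀ : E N) (R : ℝ) (φ : E N → ℝ) : Prop where
  contDiff : ContDiff ℝ (⊤ : ℕ∞) φ
  nonneg : ∀ x, 0 ≤ φ x
  eq_one : ∀ x ∈ ball x₀ R, φ x = 1
  eq_zero : ∀ x ∉ closedBall x₀ (2 * R), φ x = 0
  abs_lap_lap_le : ∀ x, |lap (lap φ) x| ≤ A * R⁻¹ ^ 4 * φ x ^ p⁻¹

/-- The inequality `Δ²u ≥ u ^ p` in the sense of distributions: it is tested against nonnegative
smooth functions with compact support. -/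
def IsDistribSupersolution {N : ℕ} (p : ℝ) (u : E N → ℝ) : Prop :=
  ∀ φ : E N → ℝ, ContDiff ℝ (⊤ : ℕ∞) φ → HasCompactSupport φ → (∀ x, 0 ≤ φ x) →
    ∫ x, u x ^ p * φ x ≤ ∫ x, u x * lap (lap φ) x

section Cutoff

theorem exists_isBilaplacianCutoff_unit (N : ℕ) {p : ℝ} (hp : 1 < p) :
    ∃ A > 0, ∃ ψ, IsBilaplacianCutoff p A (0 : E N) 1 ψ := by
  let η : ContDiffBump (0 : E N) := ⟨1, 2, one_pos, one_lt_two⟩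
  have hη : ContDiff ℝ (⊤ : ℕ∞) η := η.contDiff
  obtain ⟨k, hk⟩ := exists_nat_ge (4 / (p - 1))
  have hp' : 0 < p - 1 := sub_pos.2 hp
  have hk₀ : k ≠ 0 := by
    have : (0 : ℝ) < k := (by positivity : 0 < 4 / (p - 1)).trans_le hk
    exact_mod_cast this.ne'
  have hexp : (k + 4 : ℕ) * p⁻¹ ≤ k := by
    rw [div_le_iff₀ hp'] at hk
    rw [← div_eq_mul_inv, div_le_iff₀ (by linarith)]
    push_cast
    linarith
  obtain ⟨A, hA, hbound⟩ :=
    ((isPowMultiple_pow η (k + 4)).lap_of_add_two hη |>.lap_of_add_two hη).exists_abs_le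
      η.hasCompactSupport hk₀
  refine ⟨A, hA, fun x => η x ^ (k + 4), hη.pow _, fun x => pow_nonneg η.nonneg _, fun x hx => ?_,
    fun x hx => ?_, fun x => ?_⟩
  · simp [η.one_of_mem_closedBall (ball_subset_closedBall hx)]
  · have : η x = 0 := η.zero_of_le_dist (by simpa using hx : 2 < dist x 0).le
    simp [this]
  · calc |lap (lap fun y => η y ^ (k + 4)) x| ≤ A * |η x| ^ k := hbound x
      _ = A * η x ^ k := by rw [abs_of_nonneg η.nonneg]
      _ ≤ A * (η x ^ (k + 4)) ^ p⁻¹ := by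
        gcongr
        exact pow_le_rpow_pow η.nonneg η.le_one hk₀ hexp
      _ = A * 1⁻¹ ^ 4 * (η x ^ (k + 4)) ^ p⁻¹ := by simp

variable {N : ℕ} {p A R : ℝ} {x₀ : E N} {φ : E N → ℝ}

theorem IsBilaplacianCutoff.rescale (hφ : IsBilaplacianCutoff p A (0 : E N) 1 φ) (x₀ : E N)
    (hR : 0 < R) : IsBilaplacianCutoff p A x₀ R fun x => φ (R⁻¹ • (x - x₀)) := by
  have hnorm (x : E N) : ‖R⁻¹ • (x - x₀)‖ = dist x x₀ / R := by
    rw [norm_smul, norm_inv, Real.norm_of_nonneg hR.le, dist_eq_norm, inv_mul_eq_div]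
  refine ⟨hφ.contDiff.comp (by fun_prop), fun x => hφ.nonneg _, fun x hx => hφ.eq_one _ ?_,
    fun x hx => hφ.eq_zero _ ?_, fun x => ?_⟩
  · rwa [mem_ball_zero_iff, hnorm, div_lt_one hR]
  · rwa [mem_closedBall_zero_iff, hnorm, mul_one, div_le_iff₀ hR]
  · rw [lap_lap_comp_smul_sub, abs_mul, abs_of_nonneg (by positivity), mul_comm A, mul_assoc]
    gcongr
    simpa using hφ.abs_lap_lap_le (R⁻¹ • (x - x₀))

theorem IsBilaplacianCutoff.hasCompactSupport (hφ : IsBilaplacianCutoff p A x₀ R φ) :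
    HasCompactSupport φ :=
  .intro (isCompact_closedBall x₀ (2 * R)) hφ.eq_zero

theorem IsBilaplacianCutoff.lap_lap_eq_zero (hφ : IsBilaplacianCutoff p A x₀ R φ) (hp : p ≠ 0)
    {x : E N} (hx : x ∉ closedBall x₀ (2 * R)) : lap (lap φ) x = 0 := by
  simpa [hφ.eq_zero x hx, Real.zero_rpow (inv_ne_zero hp)] using hφ.abs_lap_lap_le x

end Cutoff

section Energy

variable {N : ℕ} {p q A R : ℝ} {x₀ : E N} {φ u : E N → ℝ}

theorem IsBilaplacianCutoff.integrable_rpow_mul (hφ : IsBilaplacianCutoff p A x₀ R φ)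
    (hup : LocallyIntegrable fun x => u x ^ p) : Integrable fun x => u x ^ p * φ x := by
  simpa [mul_comm] using
    hup.integrable_smul_left_of_hasCompactSupport hφ.contDiff.continuous hφ.hasCompactSupport

theorem IsBilaplacianCutoff.setIntegral_rpow_le (hφ : IsBilaplacianCutoff p A x₀ R φ)
    (hu : ∀ x, 0 ≤ u x) (hup : LocallyIntegrable fun x => u x ^ p) :
    ∫ x in ball x₀ R, u x ^ p ≤ ∫ x, u x ^ p * φ x :=
  calc ∫ x in ball x₀ R, u x ^ p = ∫ x in ball x₀ R, u x ^ p * φ x :=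
        setIntegral_congr_fun measurableSet_ball fun x hx => by simp [hφ.eq_one x hx]
    _ ≤ ∫ x, u x ^ p * φ x :=
        setIntegral_le_integral (hφ.integrable_rpow_mul hup)
          (Eventually.of_forall fun x => mul_nonneg (Real.rpow_nonneg (hu x) p) (hφ.nonneg x))

theorem IsBilaplacianCutoff.integral_mul_lap_lap_le (hφ : IsBilaplacianCutoff p A x₀ R φ)
    (hpq : p.HolderConjugate q) (hA : 0 ≤ A) (hu : ∀ x, 0 ≤ u x)
    (hup : LocallyIntegrable fun x => u x ^ p) :
    ∫ x, u x * lap (lap φ) x ≤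
      A * R⁻¹ ^ 4 * ((∫ x, u x ^ p * φ x) ^ p⁻¹ * volume.real (closedBall x₀ (2 * R)) ^ q⁻¹) := by
  set B := closedBall x₀ (2 * R)
  have : IsFiniteMeasure (volume.restrict B) :=
    isFiniteMeasure_restrict.2 measure_closedBall_lt_top.ne
  set v : E N → ℝ := fun x => u x * φ x ^ p⁻¹
  have hv : ∀ x, 0 ≤ v x := fun x => mul_nonneg (hu x) (Real.rpow_nonneg (hφ.nonneg x) _)
  have hvp : (fun x => v x ^ p) = fun x => u x ^ p * φ x := by
    funext x
    rw [Real.mul_rpow (hu x) (Real.rpow_nonneg (hφ.nonneg x) _),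
      Real.rpow_inv_rpow (hφ.nonneg x) hpq.ne_zero]
  have hvint : IntegrableOn (fun x => v x ^ p) B :=
    hvp ▸ (hφ.integrable_rpow_mul hup).integrableOn
  have hsupp : ∫ x in B, v x ^ p = ∫ x, u x ^ p * φ x := by
    rw [hvp]
    exact setIntegral_eq_integral_of_forall_compl_eq_zero fun x hx => by simp [hφ.eq_zero x hx]
  have hpointwise (x : E N) : ‖u x * lap (lap φ) x‖ ≤ A * R⁻¹ ^ 4 * v x := by
    rw [norm_mul, Real.norm_of_nonneg (hu x), mul_left_comm]
    exact mul_le_mul_of_nonneg_left (hφ.abs_lap_lap_le x) (hu x)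
  calc ∫ x, u x * lap (lap φ) x = ∫ x in B, u x * lap (lap φ) x :=
        (setIntegral_eq_integral_of_forall_compl_eq_zero fun x hx => by
          simp [hφ.lap_lap_eq_zero hpq.ne_zero hx]).symm
    _ ≤ ∫ x in B, A * R⁻¹ ^ 4 * v x :=
        (le_abs_self _).trans (norm_integral_le_of_norm_le
          ((integrable_of_integrable_rpow hpq.lt.le (Eventually.of_forall hv) hvint).const_mul _)
          (Eventually.of_forall hpointwise))
    _ = A * R⁻¹ ^ 4 * ∫ x in B, v x := integral_const_mul _ _
    _ ≤ A * R⁻¹ ^ 4 * ((∫ x, u x ^ p * φ x) ^ p⁻¹ * volume.real B ^ q⁻¹) := by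
        have := integral_le_rpow_mul_measureReal_rpow hpq (Eventually.of_forall hv) hvint
        rw [hsupp, measureReal_restrict_apply_univ] at this
        gcongr

theorem IsDistribSupersolution.setIntegral_rpow_le (hsol : IsDistribSupersolution p u)
    (hφ : IsBilaplacianCutoff p A x₀ R φ) (hpq : p.HolderConjugate q) (hA : 0 ≤ A)
    (hu : ∀ x, 0 ≤ u x) (hup : LocallyIntegrable fun x => u x ^ p) :
    ∫ x in ball x₀ R, u x ^ p ≤ (A * R⁻¹ ^ 4) ^ q * volume.real (closedBall x₀ (2 * R)) := by
  set X := ∫ x, u x ^ p * φ x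
  set V := volume.real (closedBall x₀ (2 * R))
  have hX : 0 ≤ X :=
    integral_nonneg fun x => mul_nonneg (Real.rpow_nonneg (hu x) p) (hφ.nonneg x)
  have hself : X ≤ A * R⁻¹ ^ 4 * V ^ q⁻¹ * X ^ p⁻¹ :=
    calc X ≤ ∫ x, u x * lap (lap φ) x := hsol φ hφ.contDiff hφ.hasCompactSupport hφ.nonneg
      _ ≤ A * R⁻¹ ^ 4 * (X ^ p⁻¹ * V ^ q⁻¹) := hφ.integral_mul_lap_lap_le hpq hA hu hup
      _ = A * R⁻¹ ^ 4 * V ^ q⁻¹ * X ^ p⁻¹ := by ring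
  calc ∫ x in ball x₀ R, u x ^ p ≤ X := hφ.setIntegral_rpow_le hu hup
    _ ≤ (A * R⁻¹ ^ 4 * V ^ q⁻¹) ^ q := le_rpow_of_le_mul_rpow_inv hpq (by positivity) hX hself
    _ = (A * R⁻¹ ^ 4) ^ q * V := by
      rw [Real.mul_rpow (by positivity) (by positivity),
        Real.rpow_inv_rpow measureReal_nonneg hpq.symm.ne_zero]

theorem exists_setIntegral_rpow_le (N : ℕ) (hpq : p.HolderConjugate q) :
    ∃ C > 0, ∀ u : E N → ℝ, (∀ x, 0 ≤ u x) → LocallyIntegrable (fun x => u x ^ p) →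
      IsDistribSupersolution p u → ∀ (x₀ : E N) (R : ℝ), 0 < R →
        ∫ x in ball x₀ R, u x ^ p ≤ C * R ^ (N - 4 * q) := by
  obtain ⟨A, hA, ψ, hψ⟩ := exists_isBilaplacianCutoff_unit N hpq.lt
  have hV : 0 < volume.real (ball (0 : E N) 1) := 
    ENNReal.toReal_pos (measure_ball_pos _ _ one_pos).ne' measure_ball_lt_top.ne
  refine ⟨A ^ q * 2 ^ N * volume.real (ball (0 : E N) 1), by positivity,
    fun u hu hup hsol x₀ R hR =>
      (hsol.setIntegral_rpow_le (hψ.rescale x₀ hR) hpq hA.le hu hup).trans_eq ?_⟩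
  have hvol : volume.real (closedBall x₀ (2 * R)) =
      (2 * R) ^ N * volume.real (ball (0 : E N) 1) := by
    simpa using Measure.addHaar_real_closedBall (volume : Measure (E N)) x₀
      (by positivity : 0 ≤ 2 * R)
  have hscale : (R⁻¹ ^ 4) ^ q = R ^ (-(4 * q)) := by
    rw [← Real.rpow_natCast, Real.inv_rpow hR.le, ← Real.rpow_neg hR.le, ← Real.rpow_mul hR.le]
    simp
  rw [hvol, Real.mul_rpow hA.le (by positivity), hscale, sub_eq_add_neg, Real.rpow_add hR,
    Real.rpow_natCast]
  ring

theorem setIntegral_ball_le_of_setIntegral_rpow_le {C s : ℝ} (hpq : p.HolderConjugate q)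
    (hC : 0 ≤ C) (hR : 0 < R) (hu : ∀ x, 0 ≤ u x)
    (hup : LocallyIntegrable fun x => u x ^ p)
    (h : ∫ x in ball x₀ R, u x ^ p ≤ C * R ^ (N - s)) :
    ∫ x in ball x₀ R, u x ≤
      C ^ p⁻¹ * volume.real (ball (0 : E N) 1) ^ q⁻¹ * R ^ (N - s / p) := by
  have : IsFiniteMeasure (volume.restrict (ball x₀ R)) :=
    isFiniteMeasure_restrict.2 measure_ball_lt_top.ne
  have hint : IntegrableOn (fun x => u x ^ p) (ball x₀ R) :=
    (hup.integrableOn_isCompact (isCompact_closedBall x₀ R)).mono_set ball_subset_closedBall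
  have hvol : volume.real (ball x₀ R) = R ^ (N : ℝ) * volume.real (ball (0 : E N) 1) := by
    simp [Measure.real, Measure.addHaar_ball_of_pos (volume : Measure (E N)) x₀ hR, hR.le]
  have hexp : (N - s) * p⁻¹ + N * q⁻¹ = N - s / p := by
    linear_combination (N : ℝ) * hpq.inv_add_inv_eq_one
  calc ∫ x in ball x₀ R, u x
      ≤ (∫ x in ball x₀ R, u x ^ p) ^ p⁻¹ * volume.real (ball x₀ R) ^ q⁻¹ := by
        simpa using integral_le_rpow_mul_measureReal_rpow hpq (Eventually.of_forall hu) hint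
    _ ≤ (C * R ^ (N - s)) ^ p⁻¹ * volume.real (ball x₀ R) ^ q⁻¹ := by
        gcongr
        · exact integral_nonneg fun x => Real.rpow_nonneg (hu x) p
        · exact hpq.inv_nonneg
    _ = C ^ p⁻¹ * volume.real (ball (0 : E N) 1) ^ q⁻¹ * R ^ (N - s / p) := by
        rw [hvol, Real.mul_rpow hC (by positivity), Real.mul_rpow (by positivity) (by positivity),
          ← Real.rpow_mul hR.le, ← Real.rpow_mul hR.le, ← hexp, Real.rpow_add hR]
        ring

end Energy

theorem distributional_energy_estimates_general (N : ℕ) {p : ℝ} (hp : 1 < p) :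
    ∃ C > 0, ∀ u : E N → ℝ, (∀ x, 0 ≤ u x) → LocallyIntegrable (fun x => u x ^ p) →
      IsDistribSupersolution p u → ∀ (x₀ : E N) (R : ℝ), 0 < R →
        ∫ x in ball x₀ R, u x ^ p ≤ C * R ^ (N - 4 * p / (p - 1)) ∧
        ∫ x in ball x₀ R, u x ≤ C * R ^ (N - 4 / (p - 1)) := by
  have hpq : p.HolderConjugate (p / (p - 1)) := .conjExponent hp
  obtain ⟨C, hC, henergy⟩ := exists_setIntegral_rpow_le N hpq
  set C' := C ^ p⁻¹ * volume.real (ball (0 : E N) 1) ^ (p / (p - 1))⁻¹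
  have hexp : 4 * p / (p - 1) / p = 4 / (p - 1) := by
    rw [div_right_comm, mul_div_cancel_right₀ _ hpq.ne_zero]
  refine ⟨max C C', lt_max_of_lt_left hC, fun u hu hup hsol x₀ R hR => ?_⟩
  have hup_le : ∫ x in ball x₀ R, u x ^ p ≤ C * R ^ (N - 4 * p / (p - 1)) := by
    simpa only [mul_div_assoc] using henergy u hu hup hsol x₀ R hR
  have hu_le := setIntegral_ball_le_of_setIntegral_rpow_le hpq hC.le hR hu hup hup_le
  rw [hexp] at hu_le
  exact ⟨hup_le.trans (by gcongr; exact le_max_left C C'),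
    hu_le.trans (by gcongr; exact le_max_right C C')⟩

theorem one_lt_of_div_sub_lt {a b p : ℝ} (hb : 0 ≤ b) (hab : b < a) (hp : a / (a - b) < p) :
    1 < p :=
  lt_of_le_of_lt ((one_le_div (sub_pos.2 hab)).2 (sub_le_self a hb)) hp

theorem distributional_energy_estimates {N : ℕ} (hN : 5 ≤ N) (p : ℝ)
    (hp : (N : ℝ) / ((N : ℝ) - 4) < p)
    (u : E N → ℝ) (hnn : ∀ x, 0 ≤ u x)
    (huloc : LocallyIntegrable u volume)
    (huploc : LocallyIntegrable (fun x => u x ^ p) volume)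
    (hsol : ∀ φ : E N → ℝ, ContDiff ℝ (⊤ : ℕ∞) φ → HasCompactSupport φ →
      ∫ x, u x * lap (lap φ) x = ∫ x, u x ^ p * φ x) :
    ∃ C > (0 : ℝ), ∀ R : ℝ, 0 < R →
      (∫ x in Metric.ball (0 : E N) R, u x ^ p) ≤ C * R ^ ((N : ℝ) - 4 * p / (p - 1)) ∧
      (∫ x in Metric.ball (0 : E N) R, u x) ≤ C * R ^ ((N : ℝ) - 4 / (p - 1)) := by
  have hN' : (4 : ℝ) < N := by exact_mod_cast hN
  obtain ⟨C, hC, hest⟩ :=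
    distributional_energy_estimates_general N (one_lt_of_div_sub_lt zero_le_four hN' hp)
  exact ⟨C, hC, hest u hnn huploc (fun φ hφ hφc _ => (hsol φ hφ hφc).ge) 0⟩
end
end
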